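/- Let n ≥ 11 and let G be a minimizer graph of 𝔾_{n,3}, i.e., a connected simple graph on n vertices with domination number 3 whose spectral radius is minimum among all such graphs. Then there exists an integer a with 1 ≤ a and 2a + 7 ≤ n such that G is isomorphic to G_2(a, n − 2a − 7, a). -/

import Mathlib

open SimpleGraph

/-- Adjacency matrix of a simple graph over ℝ. -/
noncomputable def adjMat {V : Type*} (G : SimpleGraph V) : Matrix V V ℝ :=
  Matrix.of fun i j => @ite ℝ (G.Adj i j) (Classical.propDecidable _) 1 0

/-- Spectral radius: the largest eigenvalue (supremum of the real spectrum)
of the adjacency matrix. -/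
noncomputable def specRad {V : Type*} [Fintype V] [DecidableEq V]
    (G : SimpleGraph V) : ℝ :=
  sSup (spectrum ℝ (adjMat G))

/-- `D` is a dominating set of `G`. -/
def IsDomSet {V : Type*} (G : SimpleGraph V) (D : Finset V) : Prop :=
  ∀ v ∉ D, ∃ u ∈ D, G.Adj u v

/-- The domination number of `G`. -/
noncomputable def domNum {V : Type*} [Fintype V] (G : SimpleGraph V) : ℕ :=
  sInf {k | ∃ D : Finset V, IsDomSet G D ∧ D.card = k}

/-- The tree `G₂(a,b,c)`: the path v1 v4 v5 v2 v6 v7 v3 (vertices `Sum.inl 0, …, Sum.inl 6`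
in path order), with `a` pendant edges at v1, `b` pendant edges at v2 and `c` pendant
edges at v3. -/
def G2graph (a b c : ℕ) : SimpleGraph (Fin 7 ⊕ (Fin a ⊕ Fin b ⊕ Fin c)) :=
  SimpleGraph.fromRel (fun x y =>
    (x = Sum.inl 0 ∧ y = Sum.inl 1) ∨
    (x = Sum.inl 1 ∧ y = Sum.inl 2) ∨
    (x = Sum.inl 2 ∧ y = Sum.inl 3) ∨
    (x = Sum.inl 3 ∧ y = Sum.inl 4) ∨
    (x = Sum.inl 4 ∧ y = Sum.inl 5) ∨
    (x = Sum.inl 5 ∧ y = Sum.inl 6) ∨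
    (∃ j : Fin a, x = Sum.inl 0 ∧ y = Sum.inr (Sum.inl j)) ∨
    (∃ j : Fin b, x = Sum.inl 3 ∧ y = Sum.inr (Sum.inr (Sum.inl j))) ∨
    (∃ j : Fin c, x = Sum.inl 6 ∧ y = Sum.inr (Sum.inr (Sum.inr j))))

/-!
A minimizer is edge-minimal, hence consists of three stars linked by two edges. Let `x` be its
Perron vector, with eigenvalue `λ`, and put `t = λ²`. A branch hanging from `m` through `v`
contributes `λ x_v / x_m`; the contributions at each vertex add up to `t`, and a vertex whose
children contribute `κ` in total contributes `t / (t - κ)` to its parent. Lengthening a path at the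
expense of a pendent vertex, and balancing the two outer stars, both lower the total at the middle
star. A total below `t` for some `G₂(a,b,c)` yields a positive strict supersolution, so this tree
has spectral radius smaller than `λ`, which minimality forbids. Hence both paths are as long as
possible and the outer stars carry equally many pendent vertices.
-/

section Spectral

open scoped Matrix

section RealSymmetric

variable {ι : Type*} [Fintype ι] [DecidableEq ι] {A : Matrix ι ι ℝ}

theorem posSemidef_sSup_spectrum_smul_one_sub (hA : A.IsHermitian) :
    (sSup (spectrum ℝ A) • (1 : Matrix ι ι ℝ) - A).PosSemidef := by
  have hbdd : BddAbove (spectrum ℝ A) := by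
    rw [hA.spectrum_real_eq_range_eigenvalues]
    exact (Set.finite_range _).bddAbove
  rw [Matrix.posSemidef_iff_isHermitian_and_spectrum_nonneg]
  refine ⟨(Matrix.isHermitian_one.smul (IsSelfAdjoint.all _)).sub hA, ?_⟩
  rw [← Algebra.algebraMap_eq_smul_one, ← spectrum.singleton_sub_eq, Set.singleton_sub]
  rintro _ ⟨μ, hμ, rfl⟩
  exact sub_nonneg.2 (le_csSup hbdd hμ)

theorem exists_mulVec_eq_sSup_spectrum_smul [Nonempty ι] (hA : A.IsHermitian) :
    ∃ x ≠ 0, A *ᵥ x = sSup (spectrum ℝ A) • x := by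
  have hmem : sSup (spectrum ℝ A) ∈ spectrum ℝ A := by
    rw [hA.spectrum_real_eq_range_eigenvalues]
    exact (Set.range_nonempty _).csSup_mem (Set.finite_range _)
  have hev : Module.End.HasEigenvalue (Matrix.toLin' A) (sSup (spectrum ℝ A)) :=
    Module.End.hasEigenvalue_iff_mem_spectrum.2 (by rwa [Matrix.spectrum_toLin'])
  obtain ⟨x, hx⟩ := hev.exists_hasEigenvector
  exact ⟨x, hx.2, hx.apply_eq_smul⟩

-- `|x|` attains the maximum `ρ` of the Rayleigh quotient because `x` does.
theorem mulVec_abs_eq_sSup_spectrum_smul (hA : A.IsHermitian) (hA₀ : ∀ i j, 0 ≤ A i j)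
    {x : ι → ℝ} (hx : A *ᵥ x = sSup (spectrum ℝ A) • x) :
    A *ᵥ |x| = sSup (spectrum ℝ A) • |x| := by
  set ρ := sSup (spectrum ℝ A)
  have hpsd := posSemidef_sSup_spectrum_smul_one_sub hA
  have hform (y : ι → ℝ) : (ρ • (1 : Matrix ι ι ℝ) - A) *ᵥ y = ρ • y - A *ᵥ y := by
    rw [Matrix.sub_mulVec, Matrix.smul_mulVec, Matrix.one_mulVec]
  have hnorm : |x| ⬝ᵥ |x| = x ⬝ᵥ x :=
    Finset.sum_congr rfl fun i _ => abs_mul_abs_self (x i)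
  have hquad : x ⬝ᵥ A *ᵥ x ≤ |x| ⬝ᵥ A *ᵥ |x| := by
    simp only [dotProduct, Matrix.mulVec, Finset.mul_sum]
    refine Finset.sum_le_sum fun i _ => Finset.sum_le_sum fun j _ => (le_abs_self _).trans ?_
    rw [abs_mul, abs_mul, abs_of_nonneg (hA₀ i j), Pi.abs_apply, Pi.abs_apply]
  have hzero : |x| ⬝ᵥ (ρ • (1 : Matrix ι ι ℝ) - A) *ᵥ |x| = 0 := by
    refine le_antisymm ?_ (by simpa only [star_trivial] using hpsd.dotProduct_mulVec_nonneg |x|)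
    rw [hx] at hquad
    simpa only [hform, dotProduct_sub, dotProduct_smul, hnorm, sub_nonpos] using hquad
  have hker := (hpsd.dotProduct_mulVec_zero_iff |x|).1 (by rwa [star_trivial])
  rw [hform, sub_eq_zero] at hker
  exact hker.symm

end RealSymmetric

variable {V W : Type*} {G H : SimpleGraph V}

theorem adjMat_eq_adjMatrix (G : SimpleGraph V) [DecidableRel G.Adj] :
    adjMat G = G.adjMatrix ℝ := by
  ext v w
  simp only [adjMat, adjMatrix_apply, Matrix.of_apply]
  congr

theorem adjMat_nonneg (G : SimpleGraph V) (v w : V) : 0 ≤ adjMat G v w := by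
  classical
  rw [adjMat_eq_adjMatrix, adjMatrix_apply]
  split_ifs <;> norm_num

theorem isHermitian_adjMat (G : SimpleGraph V) : (adjMat G).IsHermitian := by
  classical
  rw [Matrix.IsHermitian, Matrix.conjTranspose_eq_transpose_of_trivial, adjMat_eq_adjMatrix]
  exact G.isSymm_adjMatrix

variable [Fintype V] [Fintype W]

/-- `x` is an eigenvector of the adjacency matrix of `G` with eigenvalue `lam` and positive
entries. For connected `G` this is the Perron vector. -/
structure IsPosEigenvector (G : SimpleGraph V) (lam : ℝ) (x : V → ℝ) : Prop where
  pos (v : V) : 0 < x v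
  mulVec_eq : adjMat G *ᵥ x = lam • x

theorem adjMat_mulVec_apply (G : SimpleGraph V) [DecidableRel G.Adj] (x : V → ℝ) (v : V) :
    (adjMat G *ᵥ x) v = ∑ w ∈ G.neighborFinset v, x w := by
  rw [adjMat_eq_adjMatrix, adjMatrix_mulVec_apply]

theorem neighborFinset_subset_of_le [DecidableRel G.Adj] [DecidableRel H.Adj] (hHG : H ≤ G)
    (v : V) : H.neighborFinset v ⊆ G.neighborFinset v := fun w => by
  simpa only [mem_neighborFinset] using @hHG v w

theorem adjMat_mulVec_mono (hHG : H ≤ G) {x : V → ℝ} (hx : 0 ≤ x) :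
    adjMat H *ᵥ x ≤ adjMat G *ᵥ x := by
  classical
  intro v
  rw [adjMat_mulVec_apply, adjMat_mulVec_apply]
  exact Finset.sum_le_sum_of_subset_of_nonneg (neighborFinset_subset_of_le hHG v) fun w _ _ => hx w

theorem adjMat_mulVec_lt_of_lt (hHG : H < G) {x : V → ℝ} (hx : ∀ v, 0 < x v) :
    adjMat H *ᵥ x < adjMat G *ᵥ x := by
  classical
  obtain ⟨v, w, hG, hH⟩ : ∃ v w, G.Adj v w ∧ ¬H.Adj v w := by
    by_contra! h
    exact hHG.not_ge fun v w => h v w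
  refine Pi.lt_def.2 ⟨adjMat_mulVec_mono hHG.le fun u => (hx u).le, v, ?_⟩
  rw [adjMat_mulVec_apply, adjMat_mulVec_apply]
  exact Finset.sum_lt_sum_of_subset (neighborFinset_subset_of_le hHG.le v)
    ((G.mem_neighborFinset v w).2 hG) (by rwa [mem_neighborFinset]) (hx w) fun u _ _ => (hx u).le

namespace IsPosEigenvector

variable {lam : ℝ} {x : V → ℝ}

theorem sum_neighborFinset [DecidableRel G.Adj] (hx : IsPosEigenvector G lam x) (v : V) :
    ∑ w ∈ G.neighborFinset v, x w = lam * x v := by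
  rw [← adjMat_mulVec_apply, hx.mulVec_eq, Pi.smul_apply, smul_eq_mul]

theorem eigenvalue_pos (hx : IsPosEigenvector G lam x) {v w : V} (h : G.Adj v w) :
    0 < lam := by
  classical
  have hsum : 0 < ∑ w ∈ G.neighborFinset v, x w :=
    Finset.sum_pos (fun w _ => hx.pos w) ⟨w, (G.mem_neighborFinset v w).2 h⟩
  rw [hx.sum_neighborFinset] at hsum
  exact pos_of_mul_pos_left hsum (hx.pos v).le

end IsPosEigenvector

variable [DecidableEq V] [DecidableEq W]

theorem exists_isPosEigenvector_specRad (hG : G.Connected) :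
    ∃ x, IsPosEigenvector G (specRad G) x := by
  classical
  have := hG.nonempty
  obtain ⟨y, hy₀, hy⟩ := exists_mulVec_eq_sSup_spectrum_smul (isHermitian_adjMat G)
  have habs := mulVec_abs_eq_sSup_spectrum_smul (isHermitian_adjMat G) (adjMat_nonneg G) hy
  have hspread {v w : V} (hvw : G.Adj v w) (hv : |y| v = 0) : |y| w = 0 := by
    have hsum := congrFun habs v
    rw [adjMat_mulVec_apply, Pi.smul_apply, hv, smul_zero] at hsum
    exact (Finset.sum_eq_zero_iff_of_nonneg fun u _ => abs_nonneg (y u)).1 hsum w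
      ((G.mem_neighborFinset v w).2 hvw)
  refine ⟨|y|, fun v => (abs_nonneg (y v)).lt_of_ne' fun hv => hy₀ (funext fun w => ?_), habs⟩
  obtain ⟨p⟩ := hG.preconnected v w
  refine abs_eq_zero.1 ?_
  induction p with
  | nil => exact hv
  | cons hadj _ ih => exact ih (hspread hadj hv)

theorem specRad_lt_of_mulVec_lt (hG : G.Connected) {lam : ℝ} {y : V → ℝ} (hy : ∀ v, 0 < y v)
    (hlt : adjMat G *ᵥ y < lam • y) : specRad G < lam := by
  obtain ⟨x, hx⟩ := exists_isPosEigenvector_specRad hG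
  have hsymm : x ⬝ᵥ adjMat G *ᵥ y = specRad G * (x ⬝ᵥ y) := by
    rw [Matrix.dotProduct_mulVec, ← Matrix.mulVec_transpose,
      ← Matrix.conjTranspose_eq_transpose_of_trivial, isHermitian_adjMat G, hx.mulVec_eq,
      smul_dotProduct, smul_eq_mul]
  have hlt' : x ⬝ᵥ adjMat G *ᵥ y < lam * (x ⬝ᵥ y) := by
    rw [← smul_eq_mul, ← dotProduct_smul]
    obtain ⟨hle, v, hv⟩ := Pi.lt_def.1 hlt
    exact Finset.sum_lt_sum (fun w _ => mul_le_mul_of_nonneg_left (hle w) (hx.pos w).le)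
      ⟨v, Finset.mem_univ v, mul_lt_mul_of_pos_left hv (hx.pos v)⟩
  rw [hsymm] at hlt'
  exact lt_of_mul_lt_mul_right hlt' (Finset.sum_nonneg fun v _ => (mul_pos (hx.pos v) (hy v)).le)

theorem specRad_lt_of_lt (hH : H.Connected) (hHG : H < G) : specRad H < specRad G := by
  obtain ⟨x, hx⟩ := exists_isPosEigenvector_specRad (hH.mono hHG.le)
  refine specRad_lt_of_mulVec_lt hH hx.pos ?_
  rw [← hx.mulVec_eq]
  exact adjMat_mulVec_lt_of_lt hHG hx.pos

theorem specRad_iso {K : SimpleGraph W} (e : G ≃g K) : specRad G = specRad K := by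
  classical
  rw [specRad, specRad, adjMat_eq_adjMatrix G, adjMat_eq_adjMatrix K, ← e.reindex_adjMatrix ℝ,
    ← Matrix.coe_reindexAlgEquiv ℝ, AlgEquiv.spectrum_eq]

end Spectral

section Domination

variable {V W : Type*} {G H : SimpleGraph V}

theorem isDomSet_iff_forall_exists {D : Finset V} :
    IsDomSet G D ↔ ∀ v, ∃ u ∈ D, u = v ∨ G.Adj u v := by
  refine ⟨fun hD v => ?_, fun hD v hv => ?_⟩
  · by_cases hv : v ∈ D
    · exact ⟨v, hv, .inl rfl⟩
    · obtain ⟨u, hu, huv⟩ := hD v hv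
      exact ⟨u, hu, .inr huv⟩
  · obtain ⟨u, hu, rfl | huv⟩ := hD v
    · exact absurd hu hv
    · exact ⟨u, hu, huv⟩

theorem IsDomSet.mono {D : Finset V} (hHG : H ≤ G) (hD : IsDomSet H D) : IsDomSet G D :=
  fun v hv => (hD v hv).imp fun _ hu => ⟨hu.1, hHG hu.2⟩

theorem IsDomSet.map_iso {K : SimpleGraph W} {D : Finset V} (hD : IsDomSet G D) (e : G ≃g K) :
    IsDomSet K (D.map e.toEquiv.toEmbedding) := by
  intro w hw
  obtain ⟨u, hu, huw⟩ := hD (e.symm w) fun h =>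
    hw (Finset.mem_map.2 ⟨_, h, e.apply_symm_apply w⟩)
  exact ⟨e u, Finset.mem_map_of_mem _ hu, by simpa using e.map_adj_iff.2 huw⟩

theorem IsDomSet.insert_erase [DecidableEq V] {D : Finset V} {u z : V} (hD : IsDomSet G D)
    (huz : G.Adj u z) (hz : ∀ w, G.Adj u w → w = z) : IsDomSet G (insert z (D.erase u)) := by
  intro v hv
  obtain rfl | hvu := eq_or_ne v u
  · exact ⟨z, Finset.mem_insert_self _ _, huz.symm⟩
  · obtain ⟨w, hw, hwv⟩ := hD v fun h =>
      hv (Finset.mem_insert_of_mem (Finset.mem_erase.2 ⟨hvu, h⟩))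
    refine ⟨w, Finset.mem_insert_of_mem (Finset.mem_erase.2 ⟨?_, hw⟩), hwv⟩
    rintro rfl
    exact hv (hz v hwv ▸ Finset.mem_insert_self _ _)

theorem exists_adj_mem_not_mem (hG : G.Connected) {S : Set V} {a b : V} (ha : a ∈ S)
    (hb : b ∉ S) : ∃ u ∈ S, ∃ v ∉ S, G.Adj u v := by
  obtain ⟨p⟩ := hG.preconnected a b
  obtain ⟨d, -, hfst, hsnd⟩ := p.exists_boundary_dart S ha hb
  exact ⟨d.fst, hfst, d.snd, hsnd, d.adj⟩

variable [Fintype V] [Fintype W]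

theorem domNum_le_card {D : Finset V} (hD : IsDomSet G D) : domNum G ≤ D.card :=
  Nat.sInf_le ⟨D, hD, rfl⟩

theorem exists_isDomSet_card_eq_domNum (G : SimpleGraph V) :
    ∃ D, IsDomSet G D ∧ D.card = domNum G :=
  Nat.sInf_mem (s := {k | ∃ D, IsDomSet G D ∧ D.card = k})
    ⟨_, Finset.univ, fun v hv => absurd (Finset.mem_univ v) hv, rfl⟩

theorem domNum_anti (hHG : H ≤ G) : domNum G ≤ domNum H := by
  obtain ⟨D, hD, hcard⟩ := exists_isDomSet_card_eq_domNum H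
  exact hcard ▸ domNum_le_card (hD.mono hHG)

theorem domNum_iso {K : SimpleGraph W} (e : G ≃g K) : domNum G = domNum K := by
  obtain ⟨D, hD, hDcard⟩ := exists_isDomSet_card_eq_domNum G
  obtain ⟨E, hE, hEcard⟩ := exists_isDomSet_card_eq_domNum K
  apply le_antisymm
  · simpa only [Finset.card_map, hEcard] using domNum_le_card (hE.map_iso e.symm)
  · simpa only [Finset.card_map, hDcard] using domNum_le_card (hD.map_iso e)

theorem domNum_eq_card_of_existsUnique {D : Finset V}
    (hD : ∀ v, ∃! u, u ∈ D ∧ (u = v ∨ G.Adj u v)) : domNum G = D.card := by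
  apply le_antisymm
  · refine domNum_le_card (isDomSet_iff_forall_exists.2 fun v => ?_)
    obtain ⟨u, hu, huv⟩ := (hD v).exists
    exact ⟨u, hu, huv⟩
  · obtain ⟨E, hE, hEcard⟩ := exists_isDomSet_card_eq_domNum G
    choose f hf using isDomSet_iff_forall_exists.1 hE
    rw [← hEcard]
    refine Finset.card_le_card_of_injOn f (fun v _ => (hf v).1) fun v hv w hw hvw => ?_
    exact (hD (f v)).unique ⟨hv, (hf v).2.imp Eq.symm Adj.symm⟩
      ⟨hw, hvw ▸ (hf w).2.imp Eq.symm Adj.symm⟩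

theorem two_le_degree_of_adj_of_forall_adj_eq [DecidableRel G.Adj] (hG : G.Connected)
    (hV : 3 ≤ Fintype.card V) {u z : V} (huz : G.Adj u z) (hz : ∀ w, G.Adj u w → w = z) :
    2 ≤ G.degree z := by
  classical
  obtain ⟨b, hb⟩ : ∃ b, b ∉ ({u, z} : Finset V) := by
    by_contra! h
    have := Finset.card_le_card fun v (_ : v ∈ Finset.univ) => h v
    rw [Finset.card_univ, Finset.card_pair huz.ne] at this
    lia
  obtain ⟨x, hx, y, hy, hxy⟩ := exists_adj_mem_not_mem hG (S := ({u, z} : Finset V)) (a := u)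
    (by simp) (by exact_mod_cast hb)
  simp only [Finset.coe_pair, Set.mem_insert_iff, Set.mem_singleton_iff, not_or] at hx hy
  obtain rfl | rfl := hx
  · exact absurd (hz y hxy) hy.2
  · rw [← card_neighborFinset_eq_degree]
    exact Finset.one_lt_card.2 ⟨u, by simpa using huz.symm, y, by simpa using hxy, Ne.symm hy.1⟩

theorem exists_isDomSet_card_eq_domNum_two_le_degree [DecidableRel G.Adj] (hG : G.Connected)
    (hV : 3 ≤ Fintype.card V) :
    ∃ D, IsDomSet G D ∧ D.card = domNum G ∧ ∀ u ∈ D, 2 ≤ G.degree u := by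
  classical
  have : Nontrivial V := Fintype.one_lt_card_iff_nontrivial.1 (by lia)
  obtain ⟨D₀, hD₀⟩ := exists_isDomSet_card_eq_domNum G
  obtain ⟨D, hD, hmax⟩ := Finset.exists_max_image
    {D : Finset V | IsDomSet G D ∧ D.card = domNum G} (fun D => ∑ u ∈ D, G.degree u)
    ⟨D₀, by simpa using hD₀⟩
  simp only [Finset.mem_filter, Finset.mem_univ, true_and, and_imp] at hD hmax
  refine ⟨D, hD.1, hD.2, fun u hu => ?_⟩
  by_contra! hdeg
  obtain ⟨z, huz, hz⟩ := degree_eq_one_iff_existsUnique_adj.1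
    (le_antisymm (Nat.lt_succ_iff.1 hdeg) (hG.preconnected.degree_pos_of_nontrivial u))
  have hE := hD.1.insert_erase huz hz
  have herase := Finset.card_erase_add_one hu
  have hzD : z ∉ D.erase u := fun h => by
    have := domNum_le_card hE
    rw [Finset.insert_eq_of_mem h] at this
    lia
  have hle := hmax _ hE (by rw [Finset.card_insert_of_notMem hzD, herase, hD.2])
  rw [Finset.sum_insert hzD, ← Finset.add_sum_erase D _ hu] at hle
  have := two_le_degree_of_adj_of_forall_adj_eq hG hV huz hz
  lia

end Domination

section G2graph

variable (a b c : ℕ)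

theorem connected_G2graph : (G2graph a b c).Connected := by
  have hinl (i : Fin 7) : (G2graph a b c).Reachable (Sum.inl 0) (Sum.inl i) := by
    induction i using Fin.induction with
    | zero => rfl
    | succ i ih => exact ih.trans (Adj.reachable (by fin_cases i <;> simp [G2graph]))
  refine connected_iff_exists_forall_reachable _ |>.2 ⟨Sum.inl 0, ?_⟩
  rintro (i | j | j | j)
  · exact hinl i
  · exact Adj.reachable (by simp [G2graph])
  · exact (hinl 3).trans (Adj.reachable (by simp [G2graph]))
  · exact (hinl 6).trans (Adj.reachable (by simp [G2graph]))

theorem domNum_G2graph : domNum (G2graph a b c) = 3 := by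
  refine domNum_eq_card_of_existsUnique (D := {Sum.inl 0, Sum.inl 3, Sum.inl 6}) fun v => ?_
  rcases v with i | j | j | j
  · fin_cases i
    exacts [⟨Sum.inl 0, by simp [G2graph]⟩, ⟨Sum.inl 0, by simp [G2graph]⟩,
      ⟨Sum.inl 3, by simp [G2graph]⟩, ⟨Sum.inl 3, by simp [G2graph]⟩,
      ⟨Sum.inl 3, by simp [G2graph]⟩, ⟨Sum.inl 6, by simp [G2graph]⟩,
      ⟨Sum.inl 6, by simp [G2graph]⟩]
  · exact ⟨Sum.inl 0, by simp [G2graph]⟩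
  · exact ⟨Sum.inl 3, by simp [G2graph]⟩
  · exact ⟨Sum.inl 6, by simp [G2graph]⟩

end G2graph

section Minimizers

variable {V W : Type*} [Fintype V] [Fintype W] {γ : ℕ} {G : SimpleGraph V} {H : SimpleGraph W}

theorem nonempty_iso_of_minimal
    (hG : Minimal (fun K : SimpleGraph V => K.Connected ∧ domNum K = γ) G)
    (hH : H.Connected) (hdom : domNum H = γ) (e : W ≃ V)
    (he : ∀ u v, H.Adj u v → G.Adj (e u) (e v)) : Nonempty (G ≃g H) := by
  let f : H.comap e.symm ≃g H := Iso.comap e.symm H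
  have hle : H.comap e.symm ≤ G := fun u v huv => by
    simpa only [Equiv.apply_symm_apply] using he _ _ huv
  rw [← hG.eq_of_le ⟨f.connected_iff.2 hH, (domNum_iso f).trans hdom⟩ hle]
  exact ⟨f⟩

variable [DecidableEq V] [DecidableEq W]

/-- `G` is a minimizer graph: it has the smallest spectral radius among the connected graphs with
domination number `γ` on its vertex set. -/
structure IsMinimizer (γ : ℕ) (G : SimpleGraph V) : Prop where
  connected : G.Connected
  domNum_eq : domNum G = γ
  specRad_le (H : SimpleGraph V) : H.Connected → domNum H = γ → specRad G ≤ specRad H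

namespace IsMinimizer

theorem minimal (hG : IsMinimizer γ G) :
    Minimal (fun K : SimpleGraph V => K.Connected ∧ domNum K = γ) G :=
  ⟨⟨hG.connected, hG.domNum_eq⟩, fun K hK hKG => hKG.eq_or_lt.elim (fun h => h.ge) fun hlt =>
    absurd (specRad_lt_of_lt hK.1 hlt) (hG.specRad_le K hK.1 hK.2).not_gt⟩

theorem specRad_le_of_card_eq (hG : IsMinimizer γ G) (hH : H.Connected) (hdom : domNum H = γ)
    (hcard : Fintype.card W = Fintype.card V) : specRad G ≤ specRad H := by
  let f := Iso.comap (Fintype.equivOfCardEq hcard.symm) H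
  rw [← specRad_iso f]
  exact hG.specRad_le _ (f.connected_iff.2 hH) ((domNum_iso f).trans hdom)

end IsMinimizer

end Minimizers

section Transfer

/-- The contribution to its parent of a vertex whose children contribute `κ` in total: if
`t = lam ^ 2` for an eigenvalue `lam` with positive eigenvector `x`, and a vertex `v` of a tree
contributes `lam * x v / x m` to its parent `m`, then this is the contribution of `v`. -/
noncomputable def transfer (t κ : ℝ) : ℝ := t / (t - κ)

/-- All partial contributions along a path with `ℓ` vertices, started from `κ`, stay below `t`. This
keeps the denominators met in `(transfer t)^[ℓ] κ` positive. -/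
def Subcritical (t : ℝ) (ℓ : ℕ) (κ : ℝ) : Prop := ∀ i < ℓ, (transfer t)^[i] κ < t

/-- The contribution of a path with three vertices and with `κ` at its far end, that is, of one arm
of `G2graph`. -/
noncomputable def armWeight (t κ : ℝ) : ℝ := (transfer t)^[3] κ

variable {t κ μ : ℝ} {ℓ : ℕ}

theorem transfer_pos (ht : 0 < t) (hκ : κ < t) : 0 < transfer t κ :=
  div_pos ht (sub_pos.2 hκ)

theorem transfer_div {a b : ℝ} (hb : b ≠ 0) : transfer t (a / b) = t * b / (t * b - a) := by
  rw [transfer, sub_div' hb, div_div_eq_mul_div]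

theorem transfer_strictMonoOn (ht : 0 < t) : StrictMonoOn (transfer t) (Set.Iio t) :=
  fun _ _ _ hμ h => div_lt_div_of_pos_left ht (sub_pos.2 hμ) (sub_lt_sub_left h t)

theorem transfer_le_transfer (ht : 0 < t) (hμ : μ < t) (h : κ ≤ μ) : transfer t κ ≤ transfer t μ :=
  (transfer_strictMonoOn ht).monotoneOn (h.trans_lt hμ) hμ h

theorem transfer_le_add_one (hκ : 0 ≤ κ) (h : κ + 1 < t) : transfer t κ ≤ κ + 1 := by
  rw [transfer, div_le_iff₀ (by linarith)]
  nlinarith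

theorem transfer_lt_add_one (hκ : 0 < κ) (h : κ + 1 < t) : transfer t κ < κ + 1 := by
  rw [transfer, div_lt_iff₀ (by linarith)]
  nlinarith

theorem transfer_add_transfer_lt (hκ : 0 < κ) (hμ : 0 < μ) (h : κ + μ < t) :
    transfer t κ + transfer t μ < 1 + transfer t (κ + μ) := by
  have hκt : 0 < t - κ := by linarith
  have hμt : 0 < t - μ := by linarith
  have hsum : 0 < t - (κ + μ) := by linarith
  unfold transfer
  rw [div_add_div _ _ hκt.ne' hμt.ne', one_add_div hsum.ne',
    div_lt_div_iff₀ (mul_pos hκt hμt) hsum]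
  nlinarith [mul_pos hκ hμ, mul_pos (mul_pos hκ hμ) hsum]

theorem transfer_le_sub_of_transfer_add_le (hμ : μ < t) (hκ : κ < t)
    (h : transfer t μ + κ ≤ t) : transfer t κ ≤ t - μ := by
  rw [transfer, div_le_iff₀ (sub_pos.2 hκ), ← div_le_iff₀' (sub_pos.2 hμ)]
  exact le_sub_iff_add_le.2 h

theorem subcritical_zero : Subcritical t 0 κ := fun _ h => absurd h (Nat.not_lt_zero _)

theorem subcritical_succ_iff :
    Subcritical t (ℓ + 1) κ ↔ κ < t ∧ Subcritical t ℓ (transfer t κ) := by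
  simp only [Subcritical, Nat.forall_lt_succ_left, Function.iterate_zero_apply,
    Function.iterate_succ_apply]

theorem subcritical_succ_iff' :
    Subcritical t (ℓ + 1) κ ↔ Subcritical t ℓ κ ∧ (transfer t)^[ℓ] κ < t :=
  Nat.forall_lt_succ_right

theorem Subcritical.anti (ht : 0 < t) (hμ : Subcritical t ℓ μ) (h : κ ≤ μ) :
    Subcritical t ℓ κ := by
  induction ℓ generalizing κ μ with
  | zero => exact subcritical_zero
  | succ ℓ ih =>
    rw [subcritical_succ_iff] at hμ ⊢
    exact ⟨h.trans_lt hμ.1, ih hμ.2 (transfer_le_transfer ht hμ.1 h)⟩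

theorem iterate_transfer_strictMonoOn (ht : 0 < t) (ℓ : ℕ) :
    StrictMonoOn (transfer t)^[ℓ] {κ | Subcritical t ℓ κ} := by
  induction ℓ with
  | zero => exact strictMonoOn_id
  | succ ℓ ih =>
    intro κ hκ μ hμ h
    rw [Set.mem_ofPred_eq, subcritical_succ_iff] at hκ hμ
    exact ih hκ.2 hμ.2 (transfer_strictMonoOn ht hκ.1 hμ.1 h)

theorem Subcritical.iterate_le (ht : 0 < t) (hμ : Subcritical t ℓ μ) (h : κ ≤ μ) :
    (transfer t)^[ℓ] κ ≤ (transfer t)^[ℓ] μ :=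
  (iterate_transfer_strictMonoOn ht ℓ).monotoneOn (hμ.anti ht h) hμ h

theorem Subcritical.iterate_pos (ht : 0 < t) (hκ : Subcritical t ℓ κ) (hℓ : ℓ ≠ 0) :
    0 < (transfer t)^[ℓ] κ := by
  obtain ⟨ℓ, rfl⟩ := Nat.exists_eq_succ_of_ne_zero hℓ
  rw [Function.iterate_succ_apply']
  exact transfer_pos ht (subcritical_succ_iff'.1 hκ).2

theorem Subcritical.subdivide (hκ₀ : 0 ≤ κ) (hκ : Subcritical t (ℓ + 1) (κ + 1)) :
    Subcritical t (ℓ + 2) κ := by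
  have hlt := (subcritical_succ_iff.1 hκ).1
  exact subcritical_succ_iff.2
    ⟨by linarith, hκ.anti (by linarith) (transfer_le_add_one hκ₀ hlt)⟩

theorem Subcritical.iterate_subdivide_le (hκ₀ : 0 ≤ κ) (hκ : Subcritical t (ℓ + 1) (κ + 1)) :
    (transfer t)^[ℓ + 2] κ ≤ (transfer t)^[ℓ + 1] (κ + 1) := by
  have hlt := (subcritical_succ_iff.1 hκ).1
  exact hκ.iterate_le (by linarith) (transfer_le_add_one hκ₀ hlt)

theorem Subcritical.iterate_subdivide_lt (hκ₀ : 0 < κ) (hκ : Subcritical t (ℓ + 1) (κ + 1)) :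
    (transfer t)^[ℓ + 2] κ < (transfer t)^[ℓ + 1] (κ + 1) := by
  have hlt := (subcritical_succ_iff.1 hκ).1
  have ht : 0 < t := by linarith
  exact iterate_transfer_strictMonoOn ht (ℓ + 1)
    (hκ.anti ht (transfer_le_add_one hκ₀.le hlt)) hκ (transfer_lt_add_one hκ₀ hlt)

end Transfer

section ClosedForm

/-- Up to the factor `s / (s + 1)`, the denominator of `armWeight (s + 1) κ`. -/
def armDenom (s κ : ℝ) : ℝ := s * (s - κ) - 1

variable {s κ μ : ℝ}

theorem armDenom_add_one (s κ : ℝ) : armDenom s κ = armDenom s (κ + 1) + s := by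
  unfold armDenom
  ring

theorem armDenom_anti (hs : 0 < s) (h : κ ≤ μ) : armDenom s μ ≤ armDenom s κ := by
  unfold armDenom
  nlinarith

theorem lt_of_armDenom_pos (hs : 0 < s) (h : 0 < armDenom s κ) : κ < s := by
  unfold armDenom at h
  nlinarith

theorem transfer_one (hs : 0 < s) : transfer (s + 1) 1 = 1 + 1 / s := by
  rw [transfer, add_sub_cancel_right, add_div, div_self hs.ne']

theorem iterate_two_transfer (hs : 0 < s) (h : κ < s) :
    (transfer (s + 1))^[2] κ = 1 + 1 / (s - κ) := by
  have hden : s - κ ≠ 0 := by linarith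
  have hden' : s + 1 - κ ≠ 0 := by linarith
  have hsplit : (s + 1) * (s + 1 - κ) - (s + 1) = (s + 1) * (s - κ) := by ring
  have hinner : transfer (s + 1) κ = (s + 1) / (s + 1 - κ) := rfl
  rw [Function.iterate_succ_apply', Function.iterate_one, hinner, transfer_div hden', hsplit]
  field_simp
  ring

theorem subcritical_three_iff (hs : 0 < s) : Subcritical (s + 1) 3 κ ↔ 0 < armDenom s κ := by
  rw [subcritical_succ_iff', subcritical_succ_iff, subcritical_succ_iff]
  refine ⟨?_, fun h => ?_⟩
  · rintro ⟨⟨h₀, h₁, -⟩, h₂⟩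
    rw [transfer, div_lt_iff₀ (by linarith)] at h₁
    have hκ : κ < s := by nlinarith
    rw [iterate_two_transfer hs hκ, add_comm s, add_lt_add_iff_left,
      div_lt_iff₀ (sub_pos.2 hκ)] at h₂
    exact sub_pos.2 h₂
  · have hκ := lt_of_armDenom_pos hs h
    refine ⟨⟨by linarith, ?_, subcritical_zero⟩, ?_⟩
    · rw [transfer, div_lt_iff₀ (by linarith)]
      nlinarith
    · rw [iterate_two_transfer hs hκ, add_comm s, add_lt_add_iff_left,
        div_lt_iff₀ (sub_pos.2 hκ)]
      exact sub_pos.1 h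

theorem armWeight_eq (hs : 0 < s) (h : 0 < armDenom s κ) :
    armWeight (s + 1) κ = (1 + 1 / s) * (1 + 1 / armDenom s κ) := by
  have hκ := lt_of_armDenom_pos hs h
  have hden : s - κ ≠ 0 := by linarith
  have hq : s * (s - κ) = armDenom s κ + 1 := (sub_add_cancel _ _).symm
  have hsplit : (s + 1) * (s - κ) - (s - κ + 1) = armDenom s κ := by
    unfold armDenom
    ring
  rw [armWeight, Function.iterate_succ_apply', iterate_two_transfer hs hκ, one_add_div hden,
    transfer_div hden, hsplit]
  field_simp
  linear_combination hq

theorem armWeight_le_of_le (hs : 0 < s) {r : ℝ} (hr : 0 < r) (h : r ≤ armDenom s κ) :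
    armWeight (s + 1) κ ≤ (1 + 1 / s) * (1 + 1 / r) := by
  rw [armWeight_eq hs (hr.trans_le h)]
  gcongr

theorem one_lt_armWeight (hs : 0 < s) (h : 0 < armDenom s κ) : 1 < armWeight (s + 1) κ := by
  rw [armWeight_eq hs h]
  have hs' : 0 < 1 / s := by positivity
  have hq : 0 < 1 / armDenom s κ := by positivity
  nlinarith

theorem armWeight_add_one (hs : 0 < s) (h : 0 < armDenom s (κ + 1)) :
    armWeight (s + 1) (κ + 1) =
      armWeight (s + 1) κ + (s + 1) / (armDenom s (κ + 1) * armDenom s κ) := by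
  have hq := armDenom_add_one s κ
  have hq' : 0 < armDenom s κ := by linarith
  rw [armWeight_eq hs h, armWeight_eq hs hq', hq]
  field_simp [(hq ▸ hq').ne']
  ring

end ClosedForm

section Optimisation

/-- The inequalities certifying that the spectral radius of `G2graph a b c` is less than the square
root of `t`: the contributions of the two arms and of the `b` pendants at the middle of the path
add up to less than `t`. -/
def Admissible (t : ℝ) (a b c : ℕ) : Prop :=
  Subcritical t 3 a ∧ Subcritical t 3 c ∧ armWeight t a + b + armWeight t c < t

variable {s : ℝ} {a b c : ℕ}

theorem armDenom_natCast_succ (s : ℝ) (a : ℕ) :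
    armDenom s a = armDenom s (a + 1 : ℕ) + s := by
  rw [Nat.cast_succ]
  exact armDenom_add_one s a

theorem armWeight_natCast_succ (hs : 0 < s) (h : 0 < armDenom s (a + 1 : ℕ)) :
    armWeight (s + 1) (a + 1 : ℕ) =
      armWeight (s + 1) a + (s + 1) / (armDenom s (a + 1 : ℕ) * armDenom s a) := by
  rw [Nat.cast_succ] at h ⊢
  exact armWeight_add_one hs h

theorem armDenom_natCast_anti (hs : 0 < s) (h : a ≤ b) : armDenom s b ≤ armDenom s a :=
  armDenom_anti hs (Nat.cast_le.2 h)

-- `armWeight` is convex in the number of pendants, so balancing two arms lowers their total.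
theorem admissible_balance (hs : 0 < s) (hq : 0 < armDenom s (a + 1 : ℕ)) (hca : c < a)
    (hsum : armWeight (s + 1) (a + 1 : ℕ) + b + armWeight (s + 1) c ≤ s + 1) :
    Admissible (s + 1) a b (c + 1) := by
  have hqa := armDenom_natCast_succ s a
  have hqc := armDenom_natCast_succ s c
  have hqac : armDenom s a ≤ armDenom s (c + 1 : ℕ) := armDenom_natCast_anti hs hca
  have hqc' : 0 < armDenom s (c + 1 : ℕ) := by linarith
  have hgap : (s + 1) / (armDenom s (c + 1 : ℕ) * armDenom s c)
      < (s + 1) / (armDenom s (a + 1 : ℕ) * armDenom s a) :=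
    div_lt_div_of_pos_left (by linarith) (mul_pos hq (by linarith))
      (mul_lt_mul (by linarith) (by linarith) (by linarith) (by linarith))
  refine ⟨(subcritical_three_iff hs).2 (by linarith), (subcritical_three_iff hs).2 hqc', ?_⟩
  rw [armWeight_natCast_succ hs hq] at hsum
  rw [armWeight_natCast_succ hs hqc']
  linarith

theorem admissible_of_armDenom_lt_one (hs : 0 < s) (hq : 0 < armDenom s (c + 1 : ℕ))
    (hq₁ : armDenom s (c + 1 : ℕ) < 1)
    (hsum : armWeight (s + 1) (c + 1 : ℕ) + b + armWeight (s + 1) c ≤ s + 1) :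
    Admissible (s + 1) c (b + 1) c := by
  have hqc := armDenom_natCast_succ s c
  have hsub : Subcritical (s + 1) 3 c := (subcritical_three_iff hs).2 (by linarith)
  have hgap : 1 < (s + 1) / (armDenom s (c + 1 : ℕ) * armDenom s c) := by
    rw [one_lt_div (mul_pos hq (by linarith)), hqc]
    nlinarith
  refine ⟨hsub, hsub, ?_⟩
  rw [armWeight_natCast_succ hs hq] at hsum
  push_cast
  linarith

theorem armWeight_natCast_succ_lt (hs : 0 < s) (hq : 1 < armDenom s (c + 1 : ℕ)) :
    armWeight (s + 1) (c + 1 : ℕ) < armWeight (s + 1) c + 1 := by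
  have hqc := armDenom_natCast_succ s c
  have hprod : s + 1 < armDenom s (c + 1 : ℕ) * armDenom s c := by
    rw [hqc]
    nlinarith
  rw [armWeight_natCast_succ hs (by linarith), add_lt_add_iff_left]
  exact (div_lt_one (by linarith)).2 hprod

theorem admissible_of_one_lt_armDenom (hs : 0 < s) (hq : 1 < armDenom s (c + 1 : ℕ))
    (hsum : armWeight (s + 1) (c + 1 : ℕ) + (b + 1 : ℕ) + armWeight (s + 1) c ≤ s + 1) :
    Admissible (s + 1) (c + 1) b (c + 1) := by
  have hsub : Subcritical (s + 1) 3 (c + 1 : ℕ) := (subcritical_three_iff hs).2 (by linarith)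
  refine ⟨hsub, hsub, ?_⟩
  have := armWeight_natCast_succ_lt hs hq
  push_cast at *
  linarith

theorem armWeight_add_armWeight_le (hs : 0 < s) (hq : 1 ≤ armDenom s (c + 1 : ℕ)) :
    armWeight (s + 1) (c + 1 : ℕ) + armWeight (s + 1) c ≤ 3 + 4 / s := by
  have hqc := armDenom_natCast_succ s c
  calc armWeight (s + 1) (c + 1 : ℕ) + armWeight (s + 1) c
      ≤ (1 + 1 / s) * (1 + 1 / 1) + (1 + 1 / s) * (1 + 1 / (1 + s)) :=
        add_le_add (armWeight_le_of_le hs one_pos hq)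
          (armWeight_le_of_le hs (by linarith) (by linarith))
    _ = 3 + 4 / s := by
        field_simp
        ring

theorem admissible_of_one_le_armDenom (hs : 0 < s) (hc : 2 ≤ c)
    (hq : 1 ≤ armDenom s (c + 1 : ℕ)) : Admissible (s + 1) (c + 1) 0 c := by
  have hqc := armDenom_natCast_succ s c
  have hs₃ : 3 < s := by
    have := lt_of_armDenom_pos hs (one_pos.trans_le hq)
    have : (2 : ℝ) ≤ c := mod_cast hc
    push_cast at *
    linarith
  have hs' : 2 ≤ s * (s - 3) := by
    have := armDenom_anti hs (show (3 : ℝ) ≤ (c + 1 : ℕ) by exact_mod_cast Nat.succ_le_succ hc)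
    unfold armDenom at this hq
    linarith
  refine ⟨(subcritical_three_iff hs).2 (by linarith), (subcritical_three_iff hs).2 (by linarith),
    ?_⟩
  have hlt : 3 + 4 / s < s + 1 := by
    rw [← sub_pos]
    field_simp
    nlinarith
  have := armWeight_add_armWeight_le hs hq
  push_cast at *
  linarith

theorem admissible_of_armDenom_eq_one (hs : 0 < s) (hq : armDenom s (c + 1 : ℕ) = 1)
    (hsum : armWeight (s + 1) (c + 1 : ℕ) + b + armWeight (s + 1) c ≤ s + 1) :
    Admissible (s + 1) (c + 1) b c := by
  have hqc := armDenom_natCast_succ s c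
  have hcs := lt_of_armDenom_pos hs (hq ▸ one_pos)
  refine ⟨(subcritical_three_iff hs).2 (by linarith), (subcritical_three_iff hs).2 (by linarith),
    hsum.lt_of_ne fun heq => ?_⟩
  rw [armWeight_eq hs (by linarith), armWeight_eq hs (by linarith), hqc, hq] at heq
  unfold armDenom at hq
  field_simp at heq
  push_cast at hq hcs
  have hprod : s * ((c : ℝ) - (b + 1)) = 2 := by
    have : (1 + s) * (s * ((c : ℝ) - (b + 1)) - 2) = 0 := by
      linear_combination -heq - (1 + s) * hq
    nlinarith
  have hbc : (b : ℝ) + 1 < c := by nlinarith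
  have hbc' : (b : ℝ) + 2 ≤ c := by exact_mod_cast hbc
  nlinarith [(b : ℕ).cast_nonneg (α := ℝ)]

theorem exists_admissible_of_lt (hs : 0 < s) (hca : c < a) (hcard : 4 ≤ a + b + c)
    (ha : Subcritical (s + 1) 3 a)
    (hsum : armWeight (s + 1) a + b + armWeight (s + 1) c ≤ s + 1) :
    ∃ a' b' c', a' + b' + c' = a + b + c ∧ Admissible (s + 1) a' b' c' := by
  obtain ⟨a, rfl⟩ := Nat.exists_eq_add_one_of_ne_zero (Nat.ne_zero_of_lt hca)
  rw [subcritical_three_iff hs] at ha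
  rcases (Nat.lt_succ_iff.1 hca).lt_or_eq with hlt | rfl
  · exact ⟨a, b, c + 1, by lia, admissible_balance hs ha hlt hsum⟩
  rcases lt_trichotomy (armDenom s (c + 1 : ℕ)) 1 with hq | hq | hq
  · exact ⟨c, b + 1, c, by lia, admissible_of_armDenom_lt_one hs ha hq hsum⟩
  · exact ⟨c + 1, b, c, rfl, admissible_of_armDenom_eq_one hs hq hsum⟩
  cases b with
  | zero => exact ⟨c + 1, 0, c, rfl, admissible_of_one_le_armDenom hs (by lia) hq.le⟩
  | succ b => exact ⟨c + 1, b, c + 1, by lia, admissible_of_one_lt_armDenom hs hq hsum⟩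

theorem admissible_one_zero (hs : 0 < s) (hb : 3 ≤ b) (h₀ : Subcritical (s + 1) 3 (0 : ℕ))
    (hsum : armWeight (s + 1) (0 : ℕ) + (b + 1 : ℕ) + armWeight (s + 1) (0 : ℕ) ≤ s + 1) :
    Admissible (s + 1) 1 b 0 := by
  have hweight := one_lt_armWeight hs ((subcritical_three_iff hs).1 h₀)
  have hb' : (3 : ℝ) ≤ b := mod_cast hb
  push_cast at hsum
  have hq : 1 < armDenom s (0 + 1 : ℕ) := by
    unfold armDenom
    push_cast at *
    nlinarith
  refine ⟨(subcritical_three_iff hs).2 (one_pos.trans hq), h₀, ?_⟩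
  have := armWeight_natCast_succ_lt hs hq
  push_cast at *
  linarith

theorem eq_and_ne_zero_of_forall_not_admissible (hs : 0 < s) (hcard : 4 ≤ a + b + c)
    (ha : Subcritical (s + 1) 3 a) (hc : Subcritical (s + 1) 3 c)
    (hsum : armWeight (s + 1) a + b + armWeight (s + 1) c ≤ s + 1)
    (hmin : ∀ a' b' c', a' + b' + c' = a + b + c → ¬ Admissible (s + 1) a' b' c') :
    a = c ∧ a ≠ 0 := by
  have hac : a = c := by
    rcases lt_trichotomy a c with hlt | heq | hlt
    · obtain ⟨a', b', c', heq, hadm⟩ :=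
        exists_admissible_of_lt (b := b) hs hlt (by lia) hc (by linarith)
      exact absurd hadm (hmin a' b' c' (by lia))
    · exact heq
    · obtain ⟨a', b', c', heq, hadm⟩ := exists_admissible_of_lt hs hlt hcard ha hsum
      exact absurd hadm (hmin a' b' c' heq)
  subst hac
  refine ⟨rfl, ?_⟩
  rintro rfl
  obtain ⟨b, rfl⟩ := Nat.exists_eq_add_one_of_ne_zero (show b ≠ 0 by lia)
  exact hmin 1 b 0 (by lia) (admissible_one_zero hs (by lia) ha hsum)

theorem admissible_of_two_short_arms (hs : 0 < s) (hb : 4 ≤ b)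
    (hsum : transfer (s + 1) 1 + (b + 2 : ℕ) + transfer (s + 1) 1 ≤ s + 1) :
    Admissible (s + 1) 0 b 0 := by
  rw [transfer_one hs] at hsum
  push_cast at hsum
  have hb' : (4 : ℝ) ≤ b := mod_cast hb
  have hs₀ : 0 < 1 / s := by positivity
  have hs₁ : 1 / s < 1 := (div_lt_one hs).2 (by linarith)
  have hq : 2 ≤ armDenom s (0 : ℕ) := by
    unfold armDenom
    push_cast
    nlinarith
  have hsub : Subcritical (s + 1) 3 (0 : ℕ) := (subcritical_three_iff hs).2 (by linarith)
  have hweight := armWeight_le_of_le hs two_pos hq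
  refine ⟨hsub, hsub, ?_⟩
  push_cast at *
  linarith

theorem admissible_of_short_arm (hs : 0 < s) (hc : Subcritical (s + 1) 3 c)
    (hsum : transfer (s + 1) 1 + (b + 1 : ℕ) + armWeight (s + 1) c ≤ s + 1) :
    Admissible (s + 1) 0 b c := by
  have hweight := one_lt_armWeight hs ((subcritical_three_iff hs).1 hc)
  rw [transfer_one hs] at hsum
  push_cast at hsum
  have : (0 : ℝ) ≤ b := b.cast_nonneg
  have hs₀ : 0 < 1 / s := by positivity
  have hs₁ : 1 / s < 1 := (div_lt_one hs).2 (by linarith)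
  have hq : 1 + s ≤ armDenom s (0 : ℕ) := by
    unfold armDenom
    push_cast
    nlinarith
  have hle : armWeight (s + 1) (0 : ℕ) ≤ 1 + 2 / s :=
    (armWeight_le_of_le hs (by linarith) hq).trans_eq (by field_simp; ring)
  have hs₂ : 2 / s = 1 / s + 1 / s := by ring
  refine ⟨(subcritical_three_iff hs).2 (by linarith), hc, ?_⟩
  push_cast at *
  linarith

theorem admissible_of_short_arm_of_no_middle (hs : 0 < s) (hc₃ : 3 ≤ c)
    (hc : Subcritical (s + 1) 3 (c + 2 : ℕ)) : Admissible (s + 1) 0 1 c := by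
  rw [subcritical_three_iff hs] at hc
  have hc₃' : (3 : ℝ) ≤ c := mod_cast hc₃
  have hs₅ : 5 < s := by
    have := lt_of_armDenom_pos hs hc
    push_cast at this
    linarith
  have hqc : 5 ≤ armDenom s c := by
    rw [armDenom_natCast_succ, armDenom_natCast_succ]
    linarith
  have hq : 5 ≤ armDenom s (0 : ℕ) := hqc.trans (armDenom_natCast_anti hs (Nat.zero_le c))
  have hs₁ : 1 / s < 1 / 5 := one_div_lt_one_div_of_lt (by norm_num) hs₅
  refine ⟨(subcritical_three_iff hs).2 (by linarith), (subcritical_three_iff hs).2 (by linarith),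
    ?_⟩
  have := armWeight_le_of_le hs (by norm_num) hq
  have := armWeight_le_of_le hs (by norm_num) hqc
  push_cast at *
  linarith

theorem exists_admissible_of_short_arm (hs : 0 < s) (hcard : 5 ≤ b + c)
    (hc : Subcritical (s + 1) 3 c)
    (hsum : transfer (s + 1) 1 + b + armWeight (s + 1) c ≤ s + 1) :
    ∃ a' b' c', a' + b' + c' + 1 = b + c ∧ Admissible (s + 1) a' b' c' := by
  cases b with
  | zero =>
    obtain ⟨c, rfl⟩ := Nat.exists_eq_add_of_le' (show 2 ≤ c by lia)
    exact ⟨0, 1, c, by lia, admissible_of_short_arm_of_no_middle hs (by lia) hc⟩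
  | succ b => exact ⟨0, b, c, by lia, admissible_of_short_arm hs hc hsum⟩

end Optimisation

section Arms

variable {t : ℝ} {a a' b ℓ ℓ' m A n : ℕ}

theorem Subcritical.of_add_eq_add (hℓ : ℓ ≠ 0) (hm : ℓ ≤ m) (hA : A + m = a + ℓ)
    (ha : Subcritical t ℓ a) :
    Subcritical t m A ∧ (transfer t)^[m] A ≤ (transfer t)^[ℓ] a := by
  induction m, hm using Nat.le_induction generalizing A with
  | base =>
    obtain rfl : A = a := by lia
    exact ⟨ha, le_rfl⟩
  | succ m hm ih =>
    obtain ⟨m, rfl⟩ := Nat.exists_eq_succ_of_ne_zero (show m ≠ 0 by lia)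
    obtain ⟨hsub, hle⟩ := ih (A := A + 1) (by lia)
    rw [Nat.cast_succ] at hsub hle
    exact ⟨hsub.subdivide A.cast_nonneg, (hsub.iterate_subdivide_le A.cast_nonneg).trans hle⟩

theorem Subcritical.iterate_lt_of_add_eq_add (hℓ : ℓ ≠ 0) (hm : ℓ < m) (hA : A + m = a + ℓ)
    (hA₀ : A ≠ 0) (ha : Subcritical t ℓ a) : (transfer t)^[m] A < (transfer t)^[ℓ] a := by
  obtain ⟨m, rfl⟩ := Nat.exists_eq_add_of_le' (show 2 ≤ m by lia)
  obtain ⟨hsub, hle⟩ :=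
    ha.of_add_eq_add (A := A + 1) hℓ (show ℓ ≤ m + 1 by lia) (by lia)
  rw [Nat.cast_succ] at hsub hle
  exact (hsub.iterate_subdivide_lt (mod_cast hA₀.bot_lt)).trans_le hle

theorem admissible_of_tripod (ht : 0 < t) (hb : b + 1 < t) {κ μ : ℝ}
    (hA : Subcritical t 2 A) (ha : Subcritical t 2 a)
    (hκ : (transfer t)^[2] A ≤ κ) (hμ : (transfer t)^[2] a ≤ μ)
    (hsum : κ + transfer t (b + 1) + μ = t) : Admissible t A b a := by
  have hbpos := transfer_pos ht hb
  have hApos := hA.iterate_pos ht two_ne_zero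
  have hapos := ha.iterate_pos ht two_ne_zero
  have hlt := transfer_add_transfer_lt (t := t) hApos hapos (by linarith)
  have hle := transfer_le_sub_of_transfer_add_le hb (κ := (transfer t)^[2] A + (transfer t)^[2] a)
    (by linarith) (by linarith)
  refine ⟨subcritical_succ_iff'.2 ⟨hA, by linarith⟩, subcritical_succ_iff'.2 ⟨ha, by linarith⟩, ?_⟩
  rw [armWeight, armWeight, Function.iterate_succ_apply' _ 2, Function.iterate_succ_apply' _ 2]
  linarith

theorem exists_admissible_of_tripod (ht : 0 < t) (ha : a ≠ 0) (ha' : a' ≠ 0) (hb : b ≠ 0)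
    (hℓ : ℓ ≠ 0) (hℓ' : ℓ' ≠ 0) (hℓ₂ : ℓ ≤ 2) (hℓ₂' : ℓ' ≤ 2) (hbt : b < t)
    (hsub : Subcritical t ℓ a) (hsub' : Subcritical t ℓ' a')
    (hsum : (transfer t)^[ℓ] a + transfer t b + (transfer t)^[ℓ'] a' = t) :
    ∃ A B C, A + B + C + 7 = b + 2 + (a + ℓ) + (a' + ℓ') ∧ Admissible t A B C := by
  obtain ⟨b, rfl⟩ := Nat.exists_eq_add_one_of_ne_zero hb
  rw [Nat.cast_succ] at hsum hbt
  obtain ⟨A, hA⟩ := Nat.exists_eq_add_of_le' (show 2 ≤ a + ℓ by lia)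
  obtain ⟨C, hC⟩ := Nat.exists_eq_add_of_le' (show 2 ≤ a' + ℓ' by lia)
  obtain ⟨hsubA, hκ⟩ := hsub.of_add_eq_add hℓ hℓ₂ hA.symm
  obtain ⟨hsubC, hμ⟩ := hsub'.of_add_eq_add hℓ' hℓ₂' hC.symm
  exact ⟨A, b, C, by lia, admissible_of_tripod ht hbt hsubA hsubC hκ hμ hsum⟩

theorem exists_admissible_of_add_eq_two (ht : 1 < t) (ha : a ≠ 0) (hℓ : ℓ ≠ 0) (hℓ' : ℓ' ≠ 0)
    (hℓ₃' : ℓ' ≤ 3) (haℓ : a + ℓ = 2) (hn : n = 1 + b + (a + ℓ) + (a' + ℓ'))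
    (hcard : 11 ≤ n) (ha' : a' ≠ 0) (hsub' : Subcritical t ℓ' a')
    (hsum : (transfer t)^[ℓ] a + b + (transfer t)^[ℓ'] a' = t) :
    ∃ A B C, A + B + C + 7 = n ∧ Admissible t A B C := by
  obtain ⟨s, rfl⟩ : ∃ s, s + 1 = t := ⟨t - 1, sub_add_cancel t 1⟩
  have hs : 0 < s := by linarith
  obtain ⟨rfl, rfl⟩ : a = 1 ∧ ℓ = 1 := by lia
  rw [Function.iterate_one, Nat.cast_one] at hsum
  rcases Nat.lt_or_ge (a' + ℓ') 3 with hshort | hlong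
  · obtain ⟨rfl, rfl⟩ : a' = 1 ∧ ℓ' = 1 := by lia
    rw [Function.iterate_one, Nat.cast_one] at hsum
    obtain ⟨b, rfl⟩ := Nat.exists_eq_add_of_le' (show 2 ≤ b by lia)
    exact ⟨0, b, 0, by lia, admissible_of_two_short_arms hs (by lia) hsum.le⟩
  · obtain ⟨C, hC⟩ := Nat.exists_eq_add_of_le' hlong
    obtain ⟨hsubC, hle⟩ := hsub'.of_add_eq_add hℓ' hℓ₃' hC.symm
    obtain ⟨A, B, C', hcard', hadm⟩ :=
      exists_admissible_of_short_arm (b := b) hs (by lia) hsubC (by unfold armWeight; linarith)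
    exact ⟨A, B, C', by lia, hadm⟩

theorem arms_eq_of_forall_not_admissible (ht : 1 < t) (ha : a ≠ 0) (ha' : a' ≠ 0)
    (hℓ : ℓ ≠ 0) (hℓ' : ℓ' ≠ 0) (hℓ₃ : ℓ ≤ 3) (hℓ₃' : ℓ' ≤ 3)
    (hn : n = 1 + b + (a + ℓ) + (a' + ℓ')) (hcard : 11 ≤ n)
    (hsub : Subcritical t ℓ a) (hsub' : Subcritical t ℓ' a')
    (hsum : (transfer t)^[ℓ] a + b + (transfer t)^[ℓ'] a' = t)
    (hmin : ∀ A B C, A + B + C + 7 = n → ¬ Admissible t A B C) :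
    ℓ = 3 ∧ ℓ' = 3 ∧ a = a' := by
  by_cases hshort : a + ℓ = 2
  · obtain ⟨A, B, C, hABC, hadm⟩ := exists_admissible_of_add_eq_two ht ha hℓ hℓ' hℓ₃' hshort hn
      hcard ha' hsub' hsum
    exact absurd hadm (hmin A B C hABC)
  by_cases hshort' : a' + ℓ' = 2
  · obtain ⟨A, B, C, hABC, hadm⟩ := exists_admissible_of_add_eq_two (b := b) ht ha' hℓ' hℓ hℓ₃
      hshort' (show n = _ by lia) hcard ha hsub (by linarith)
    exact absurd hadm (hmin A B C hABC)
  obtain ⟨A, hA⟩ := Nat.exists_eq_add_of_le' (show 3 ≤ a + ℓ by lia)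
  obtain ⟨C, hC⟩ := Nat.exists_eq_add_of_le' (show 3 ≤ a' + ℓ' by lia)
  obtain ⟨hsubA, hleA⟩ := hsub.of_add_eq_add hℓ hℓ₃ hA.symm
  obtain ⟨hsubC, hleC⟩ := hsub'.of_add_eq_add hℓ' hℓ₃' hC.symm
  have hnot := hmin A b C (by lia)
  have hle : t ≤ armWeight t A + b + armWeight t C := by
    by_contra! hlt
    exact hnot ⟨hsubA, hsubC, hlt⟩
  unfold armWeight at hle
  obtain ⟨rfl, hA₀⟩ : A = C ∧ A ≠ 0 := by
    obtain ⟨s, rfl⟩ : ∃ s, s + 1 = t := ⟨t - 1, sub_add_cancel t 1⟩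
    exact eq_and_ne_zero_of_forall_not_admissible (b := b) (by linarith) (by lia) hsubA hsubC
      (by unfold armWeight; linarith) fun A' B' C' h => hmin A' B' C' (by lia)
  have hℓ_eq : ℓ = 3 := by
    by_contra hne
    linarith [hsub.iterate_lt_of_add_eq_add hℓ (hℓ₃.lt_of_ne hne) hA.symm hA₀]
  have hℓ_eq' : ℓ' = 3 := by
    by_contra hne
    linarith [hsub'.iterate_lt_of_add_eq_add hℓ' (hℓ₃'.lt_of_ne hne) hC.symm hA₀]
  exact ⟨hℓ_eq, hℓ_eq', by lia⟩

end Arms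

section Supersolution

open scoped Matrix

variable {lam : ℝ} {a b c : ℕ}

theorem exists_arm_vector (hlam : 0 < lam) {κ : ℝ} (hκ : Subcritical (lam ^ 2) 3 κ) :
    ∃ z z₀ z₁ z₂ : ℝ, 0 < z ∧ 0 < z₀ ∧ 0 < z₁ ∧ 0 < z₂ ∧ lam * z = z₀ ∧
      lam * z₀ = κ * z + z₁ ∧ lam * z₁ = z₀ + z₂ ∧ lam * z₂ = z₁ + 1 ∧
      lam * z₂ = armWeight (lam ^ 2) κ := by
  have ht : 0 < lam ^ 2 := by positivity
  simp only [subcritical_succ_iff, subcritical_zero, and_true] at hκ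
  obtain ⟨h₀, h₁, h₂⟩ := hκ
  set k₁ := transfer (lam ^ 2) κ
  set k₂ := transfer (lam ^ 2) k₁
  set k₃ := transfer (lam ^ 2) k₂
  have hp₁ : 0 < k₁ := transfer_pos ht h₀
  have hp₂ : 0 < k₂ := transfer_pos ht h₁
  have hp₃ : 0 < k₃ := transfer_pos ht h₂
  have he₁ : k₁ * (lam ^ 2 - κ) = lam ^ 2 := div_mul_cancel₀ _ (by linarith)
  have he₂ : k₂ * (lam ^ 2 - k₁) = lam ^ 2 := div_mul_cancel₀ _ (by linarith)
  have he₃ : k₃ * (lam ^ 2 - k₂) = lam ^ 2 := div_mul_cancel₀ _ (by linarith)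
  refine ⟨k₁ * k₂ * k₃ / lam ^ 4, k₁ * k₂ * k₃ / lam ^ 3, k₂ * k₃ / lam ^ 2, k₃ / lam,
    by positivity, by positivity, by positivity, by positivity, ?_, ?_, ?_, ?_, ?_⟩
  · field_simp
  · field_simp
    linear_combination he₁
  · field_simp
    linear_combination he₂
  · field_simp
    linear_combination he₃
  · exact mul_div_cancel₀ _ hlam.ne'

theorem adjMat_mulVec_G2graph (y : Fin 7 ⊕ (Fin a ⊕ Fin b ⊕ Fin c) → ℝ) :
    adjMat (G2graph a b c) *ᵥ y =
      Sum.elim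
        ![y (.inl 1) + ∑ j, y (.inr (.inl j)), y (.inl 0) + y (.inl 2), y (.inl 1) + y (.inl 3),
          y (.inl 2) + y (.inl 4) + ∑ j, y (.inr (.inr (.inl j))), y (.inl 3) + y (.inl 5),
          y (.inl 4) + y (.inl 6), y (.inl 5) + ∑ j, y (.inr (.inr (.inr j)))]
        (Sum.elim (fun _ => y (.inl 0)) (Sum.elim (fun _ => y (.inl 3)) fun _ => y (.inl 6))) := by
  classical
  ext v
  rw [adjMat_eq_adjMatrix]
  simp only [Matrix.mulVec, dotProduct, adjMatrix_apply, ite_mul, one_mul, zero_mul,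
    Fintype.sum_sum_type, Fin.sum_univ_seven]
  rcases v with i | j | j | j
  · fin_cases i <;> simp [G2graph]
  all_goals simp [G2graph]

theorem specRad_G2graph_lt (hlam : 0 < lam) (h : Admissible (lam ^ 2) a b c) :
    specRad (G2graph a b c) < lam := by
  obtain ⟨ha, hc, hsum⟩ := h
  obtain ⟨z, z₀, z₁, z₂, hz, hz₀, hz₁, hz₂, hrow, hrow₀, hrow₁, hrow₂, hweight⟩ :=
    exists_arm_vector hlam ha
  obtain ⟨w, w₀, w₁, w₂, hw, hw₀, hw₁, hw₂, hrow', hrow₀', hrow₁', hrow₂', hweight'⟩ :=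
    exists_arm_vector hlam hc
  have hmiddle : z₂ + w₂ + b * lam⁻¹ < lam := by
    rw [← mul_lt_mul_iff_right₀ hlam, mul_add, mul_add, mul_left_comm, mul_inv_cancel₀ hlam.ne',
      hweight, hweight']
    linarith
  let y : Fin 7 ⊕ (Fin a ⊕ Fin b ⊕ Fin c) → ℝ :=
    Sum.elim ![z₀, z₁, z₂, 1, w₂, w₁, w₀]
      (Sum.elim (fun _ => z) (Sum.elim (fun _ => lam⁻¹) fun _ => w))
  refine specRad_lt_of_mulVec_lt (y := y) (connected_G2graph a b c) ?_ ?_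
  · rintro (i | _ | _ | _)
    · fin_cases i <;> simp [y, *]
    exacts [hz, inv_pos.2 hlam, hw]
  rw [adjMat_mulVec_G2graph]
  refine Pi.lt_def.2 ⟨?_, Sum.inl 3, by simpa [y] using hmiddle⟩
  rintro (i | _ | _ | _)
  · fin_cases i <;> simp [y] <;> linarith
  · simp [y, hrow]
  · simp [y, hlam.ne']
  · simp [y, hrow']

end Supersolution

section Brooms

variable {V : Type*} {G : SimpleGraph V} {a ℓ : ℕ} {v m : V}

/-- `IsBroom G a ℓ v m`: the branch of `G` hanging from `m` through its neighbour `v` is a path with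
`ℓ` vertices starting at `v` whose last vertex carries `a` pendant vertices. -/
inductive IsBroom (G : SimpleGraph V) : ℕ → ℕ → V → V → Prop
  | star {v m : V} {P : Finset V} (hm : m ∉ P) (hv : ∀ w, G.Adj v w ↔ w = m ∨ w ∈ P)
      (hP : ∀ u ∈ P, ∀ w, G.Adj u w ↔ w = v) : IsBroom G P.card 1 v m
  | cons {a ℓ : ℕ} {w v m : V} (hw : IsBroom G a ℓ w v) (hmw : m ≠ w)
      (hv : ∀ u, G.Adj v u ↔ u = m ∨ u = w) : IsBroom G a (ℓ + 1) v m

theorem IsBroom.adj (h : IsBroom G a ℓ v m) : G.Adj v m := by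
  cases h with
  | star _ hv _ => exact (hv m).2 (.inl rfl)
  | cons _ _ hv => exact (hv m).2 (.inl rfl)

variable [Fintype V] {lam : ℝ} {x : V → ℝ}

theorem IsPosEigenvector.sum_eq_of_adj_iff (hx : IsPosEigenvector G lam x) {S : Finset V}
    (hS : ∀ w, G.Adj v w ↔ w ∈ S) : ∑ w ∈ S, x w = lam * x v := by
  classical
  rw [← hx.sum_neighborFinset v]
  congr 1
  ext w
  rw [mem_neighborFinset, hS]

theorem IsPosEigenvector.sum_pendants (hx : IsPosEigenvector G lam x) {P : Finset V}
    (hP : ∀ u ∈ P, ∀ w, G.Adj u w ↔ w = v) : lam * ∑ u ∈ P, x u = P.card * x v := by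
  rw [Finset.mul_sum, ← nsmul_eq_mul, ← Finset.sum_const]
  refine Finset.sum_congr rfl fun u hu => ?_
  rw [← hx.sum_eq_of_adj_iff (S := {v}) (by simpa using hP u hu), Finset.sum_singleton]

theorem IsPosEigenvector.mul_eq_transfer_mul (hx : IsPosEigenvector G lam x) (hlam : 0 < lam)
    {κ rest : ℝ} (hv : lam * x v = x m + rest) (hrest : lam * rest = κ * x v) :
    κ < lam ^ 2 ∧ lam * x v = transfer (lam ^ 2) κ * x m := by
  have hmul : (lam ^ 2 - κ) * x v = lam * x m := by linear_combination lam * hv + hrest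
  have hκ : 0 < lam ^ 2 - κ :=
    pos_of_mul_pos_left (hmul ▸ mul_pos hlam (hx.pos m)) (hx.pos v).le
  refine ⟨sub_pos.1 hκ, ?_⟩
  rw [transfer, div_mul_eq_mul_div, eq_div_iff hκ.ne']
  linear_combination lam * hmul

theorem IsBroom.subcritical_and_mul_eq (h : IsBroom G a ℓ v m) (hx : IsPosEigenvector G lam x) :
    Subcritical (lam ^ 2) ℓ a ∧ lam * x v = (transfer (lam ^ 2))^[ℓ] a * x m := by
  classical
  have hlam := hx.eigenvalue_pos h.adj
  induction h with
  | @star v m P hm hv hP =>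
    have hsum := hx.sum_eq_of_adj_iff (S := insert m P) (by simpa using hv)
    rw [Finset.sum_insert hm] at hsum
    obtain ⟨hlt, heq⟩ := hx.mul_eq_transfer_mul hlam hsum.symm (hx.sum_pendants hP)
    exact ⟨subcritical_succ_iff'.2 ⟨subcritical_zero, hlt⟩, heq⟩
  | @cons a ℓ w v m _ hmw hv ih =>
    have hsum := hx.sum_eq_of_adj_iff (S := {m, w}) (by simpa using hv)
    rw [Finset.sum_pair hmw] at hsum
    obtain ⟨hsub, hw⟩ := ih
    obtain ⟨hlt, heq⟩ := hx.mul_eq_transfer_mul hlam hsum.symm hw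
    rw [Function.iterate_succ_apply']
    exact ⟨subcritical_succ_iff'.2 ⟨hsub, hlt⟩, heq⟩

theorem IsPosEigenvector.iterate_add_card_add_iterate (hx : IsPosEigenvector G lam x)
    {a' ℓ' : ℕ} {u u' : V} {P : Finset V} (hu : IsBroom G a ℓ u v) (hu' : IsBroom G a' ℓ' u' v)
    (hne : u ≠ u') (hmem : u ∉ P) (hmem' : u' ∉ P)
    (hv : ∀ w, G.Adj v w ↔ w = u ∨ w = u' ∨ w ∈ P) (hP : ∀ w ∈ P, ∀ z, G.Adj w z ↔ z = v) :
    (transfer (lam ^ 2))^[ℓ] a + P.card + (transfer (lam ^ 2))^[ℓ'] a' = lam ^ 2 := by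
  classical
  have hsum := hx.sum_eq_of_adj_iff (S := insert u (insert u' P)) (by simpa using hv)
  rw [Finset.sum_insert (by simp [hne, hmem]), Finset.sum_insert hmem'] at hsum
  refine mul_right_cancel₀ (hx.pos v).ne' ?_
  linear_combination lam * hsum - (hu.subcritical_and_mul_eq hx).2 -
    (hu'.subcritical_and_mul_eq hx).2 - hx.sum_pendants hP

theorem IsPosEigenvector.iterate_add_iterate_add_iterate (hx : IsPosEigenvector G lam x)
    {a₁ a₂ a₃ ℓ₁ ℓ₂ ℓ₃ : ℕ} {u₁ u₂ u₃ : V} (h₁ : IsBroom G a₁ ℓ₁ u₁ v) (h₂ : IsBroom G a₂ ℓ₂ u₂ v)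
    (h₃ : IsBroom G a₃ ℓ₃ u₃ v) (h₁₂ : u₁ ≠ u₂) (h₁₃ : u₁ ≠ u₃) (h₂₃ : u₂ ≠ u₃)
    (hv : ∀ w, G.Adj v w ↔ w = u₁ ∨ w = u₂ ∨ w = u₃) :
    (transfer (lam ^ 2))^[ℓ₁] a₁ + (transfer (lam ^ 2))^[ℓ₂] a₂ +
      (transfer (lam ^ 2))^[ℓ₃] a₃ = lam ^ 2 := by
  classical
  have hsum := hx.sum_eq_of_adj_iff (S := {u₁, u₂, u₃}) (by simpa using hv)
  rw [Finset.sum_insert (by simp [h₁₂, h₁₃]), Finset.sum_pair h₂₃] at hsum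
  refine mul_right_cancel₀ (hx.pos v).ne' ?_
  linear_combination lam * hsum - (h₁.subcritical_and_mul_eq hx).2 -
    (h₂.subcritical_and_mul_eq hx).2 - (h₃.subcritical_and_mul_eq hx).2

end Brooms

section StarChains

/-- Three vertex-disjoint stars covering `V`, given by the map sending each vertex to the center of
its star, together with vertices `p`, `q`, `r`, `s` such that `p` lies in the first star, `q` and
`r` lie in the second one and `s` lies in the third one. -/
structure StarChain (V : Type*) where
  center : V → V
  p : V
  q : V
  r : V
  s : V
  center_center : ∀ v, center (center v) = center v
  center_r : center r = center q
  center_p_ne_center_q : center p ≠ center q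
  center_p_ne_center_s : center p ≠ center s
  center_q_ne_center_s : center q ≠ center s
  center_eq : ∀ v, center v = center p ∨ center v = center q ∨ center v = center s

namespace StarChain

variable {V : Type*} (S : StarChain V) {u v w : V}

/-- The graph of a star chain: the three stars, linked by the edges `pq` and `rs`. -/
def graph : SimpleGraph V :=
  .fromRel fun u v => S.center u = v ∨ u = S.p ∧ v = S.q ∨ u = S.r ∧ v = S.s

/-- The star chain read from its other end; it has the same graph. -/
def reverse : StarChain V where
  center := S.center
  p := S.s
  q := S.r
  r := S.q
  s := S.p
  center_center := S.center_center
  center_r := S.center_r.symm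
  center_p_ne_center_q := S.center_r ▸ S.center_q_ne_center_s.symm
  center_p_ne_center_s := S.center_p_ne_center_s.symm
  center_q_ne_center_s := S.center_r ▸ S.center_p_ne_center_q.symm
  center_eq v := by
    have := S.center_eq v
    rw [S.center_r]
    tauto

theorem graph_adj_iff : S.graph.Adj u v ↔ u ≠ v ∧ (S.center u = v ∨ S.center v = u ∨
    u = S.p ∧ v = S.q ∨ u = S.q ∧ v = S.p ∨ u = S.r ∧ v = S.s ∨ u = S.s ∧ v = S.r) := by
  rw [graph, fromRel_adj]
  tauto

theorem graph_reverse : S.reverse.graph = S.graph := by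
  ext u v
  simp only [graph_adj_iff, reverse]
  tauto

theorem graph_adj_center (h : v ≠ S.center v) : S.graph.Adj v (S.center v) :=
  S.graph_adj_iff.2 ⟨h, .inl rfl⟩

theorem graph_adj_p_q : S.graph.Adj S.p S.q :=
  S.graph_adj_iff.2 ⟨ne_of_apply_ne _ S.center_p_ne_center_q, by tauto⟩

theorem graph_adj_r_s : S.graph.Adj S.r S.s :=
  S.graph_reverse ▸ S.reverse.graph_adj_p_q.symm

theorem connected_graph : S.graph.Connected := by
  have hcenter (v : V) : S.graph.Reachable v (S.center v) := by
    by_cases h : v = S.center v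
    · rw [← h]
    · exact (S.graph_adj_center h).reachable
  have hpq : S.graph.Reachable (S.center S.p) (S.center S.q) :=
    (hcenter S.p).symm.trans (S.graph_adj_p_q.reachable.trans (hcenter S.q))
  have hqs : S.graph.Reachable (S.center S.q) (S.center S.s) :=
    S.center_r ▸ (hcenter S.r).symm.trans (S.graph_adj_r_s.reachable.trans (hcenter S.s))
  refine (connected_iff_exists_forall_reachable _).2 ⟨S.center S.q, fun v => ?_⟩
  refine .trans ?_ (hcenter v).symm
  rcases S.center_eq v with h | h | h <;> rw [h]
  · exact hpq.symm
  · exact hqs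

theorem domNum_graph_le [Fintype V] : domNum S.graph ≤ 3 := by
  classical
  refine (domNum_le_card (D := {S.center S.p, S.center S.q, S.center S.s}) ?_).trans
    Finset.card_le_three
  refine isDomSet_iff_forall_exists.2 fun v => ⟨S.center v, by simpa using S.center_eq v, ?_⟩
  by_cases h : S.center v = v
  · exact .inl h
  · exact .inr (S.graph_adj_center (Ne.symm h)).symm

end StarChain

variable {V : Type*} {G : SimpleGraph V}

theorem IsDomSet.exists_center {D : Finset V} (hD : IsDomSet G D) :
    ∃ c : V → V, (∀ v, c v ∈ D) ∧ (∀ v ∈ D, c v = v) ∧ ∀ v, v ≠ c v → G.Adj v (c v) := by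
  have hexists (v : V) : ∃ u ∈ D, (v ∈ D → u = v) ∧ (v ≠ u → G.Adj v u) := by
    by_cases hv : v ∈ D
    · exact ⟨v, hv, fun _ => rfl, fun h => absurd rfl h⟩
    · obtain ⟨u, hu, huv⟩ := hD v hv
      exact ⟨u, hu, fun h => absurd h hv, fun _ => huv.symm⟩
  choose c hmem hfix hadj using hexists
  exact ⟨c, hmem, hfix, hadj⟩

theorem exists_starChain_of_card_eq_three (hG : G.Connected) {D : Finset V} (hD : D.card = 3)
    {c : V → V} (hmem : ∀ v, c v ∈ D) (hfix : ∀ v ∈ D, c v = v) :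
    ∃ S : StarChain V, S.center = c ∧ G.Adj S.p S.q ∧ G.Adj S.r S.s := by
  classical
  obtain ⟨x, hx, x', hx', hxx'⟩ := Finset.one_lt_card.1 (show 1 < D.card by lia)
  obtain ⟨u, hu, v, hv, huv⟩ := exists_adj_mem_not_mem hG (S := {v | c v = x}) (hfix x hx)
    (show c x' ≠ x from (hfix x' hx').trans_ne hxx'.symm)
  have huv' : c v ≠ c u := hu ▸ hv
  obtain ⟨z, hz, hzuv⟩ := Finset.exists_mem_notMem_of_card_lt_card
    (show ({c u, c v} : Finset V).card < D.card from Finset.card_le_two.trans_lt (by lia))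
  obtain ⟨hzu, hzv⟩ : z ≠ c u ∧ z ≠ c v := by simpa using hzuv
  have hD_eq : ({z, c u, c v} : Finset V) = D := Finset.eq_of_subset_of_card_le
    (by simp [Finset.insert_subset_iff, hz, hmem])
    (hD.trans_le (Finset.card_eq_three.2 ⟨z, c u, c v, hzu, hzv, huv'.symm, rfl⟩).ge)
  have hcover (w : V) : c w = z ∨ c w = c u ∨ c w = c v := by simpa [← hD_eq] using hmem w
  obtain ⟨s, hs, r, hr, hsr⟩ := exists_adj_mem_not_mem hG (S := {w | c w = z}) (hfix z hz)
    (show c u ≠ z from hzu.symm)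
  subst hs
  have hcc (w : V) : c (c w) = c w := hfix _ (hmem w)
  rcases (hcover r).resolve_left hr with hru | hrv
  · exact ⟨⟨c, v, u, r, s, hcc, hru, huv', hzv.symm, hzu.symm, fun w => by
      have := hcover w
      tauto⟩, rfl, huv.symm, hsr.symm⟩
  · exact ⟨⟨c, u, v, r, s, hcc, hrv, huv'.symm, hzu.symm, hzv.symm, fun w => by
      have := hcover w
      tauto⟩, rfl, huv, hsr.symm⟩

theorem exists_starChain_graph_eq [Fintype V]
    (hG : Minimal (fun K : SimpleGraph V => K.Connected ∧ domNum K = 3) G)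
    (hV : 3 ≤ Fintype.card V) :
    ∃ S : StarChain V, S.graph = G ∧ ∀ v, (G.neighborSet (S.center v)).Nontrivial := by
  classical
  obtain ⟨⟨hconn, hdom⟩, -⟩ := id hG
  obtain ⟨D, hD, hcard, hdeg⟩ := exists_isDomSet_card_eq_domNum_two_le_degree hconn hV
  obtain ⟨c, hmem, hfix, hadj⟩ := hD.exists_center
  obtain ⟨S, rfl, hpq, hrs⟩ :=
    exists_starChain_of_card_eq_three hconn (hcard.trans hdom) hmem hfix
  have hle : S.graph ≤ G := fun u v huv => by
    obtain ⟨hne, rfl | rfl | ⟨rfl, rfl⟩ | ⟨rfl, rfl⟩ | ⟨rfl, rfl⟩ | ⟨rfl, rfl⟩⟩ :=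
      S.graph_adj_iff.1 huv
    exacts [hadj u hne, (hadj v hne.symm).symm, hpq, hpq.symm, hrs, hrs.symm]
  refine ⟨S, hG.eq_of_le ⟨S.connected_graph, ?_⟩ hle, fun v => ?_⟩
  · exact S.domNum_graph_le.antisymm (hdom ▸ domNum_anti hle)
  · obtain ⟨x, hx, y, hy, hxy⟩ := Finset.one_lt_card.1 (hdeg _ (hmem v))
    exact ⟨x, (G.mem_neighborFinset _ _).1 hx, y, (G.mem_neighborFinset _ _).1 hy, hxy⟩

end StarChains

namespace StarChain

section Path

variable {V : Type*} (S : StarChain V) {w : V}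

theorem graph_adj_q_iff (hqr : S.q = S.r) (hq : S.q ≠ S.center S.q) :
    S.graph.Adj S.q w ↔ w = S.p ∨ w = S.center S.q ∨ w = S.s := by
  have hcc := S.center_center
  have hpq := S.center_p_ne_center_q
  have hqs := S.center_q_ne_center_s
  grind [graph_adj_iff]

variable [DecidableEq V]

/-- The number of path vertices, on the side of `p`, in the star with center `center p`. -/
def endLength : ℕ := if S.p = S.center S.p then 1 else 2

/-- The number of path vertices on the side of `p` of `center q`. -/
def armLength : ℕ := if S.q = S.center S.q then S.endLength else S.endLength + 1

/-- The neighbour of `center q` on the path to the star with center `center p`. -/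
def armTop : V := if S.q = S.center S.q then S.p else S.q

theorem endLength_ne_zero : S.endLength ≠ 0 := by
  grind [endLength]

theorem endLength_le_two : S.endLength ≤ 2 := by
  grind [endLength]

theorem armLength_ne_zero : S.armLength ≠ 0 := by
  grind [armLength, endLength]

theorem armLength_le_three : S.armLength ≤ 3 := by
  grind [armLength, endLength]

theorem armLength_eq_three_iff :
    S.armLength = 3 ↔ S.p ≠ S.center S.p ∧ S.q ≠ S.center S.q := by
  grind [armLength, endLength]

theorem armTop_ne_armTop_reverse (h : S.q = S.r → S.q = S.center S.q) :
    S.armTop ≠ S.reverse.armTop := by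
  have hpq := S.center_p_ne_center_q
  have hps := S.center_p_ne_center_s
  have hqs := S.center_q_ne_center_s
  have hr := S.center_r
  grind [armTop, reverse]

end Path

section Pendants

open scoped Finset

variable {V : Type*} [Fintype V] [DecidableEq V] (S : StarChain V) {u w z : V}

/-- The vertices of the star with center `u` that are neither `u` nor an end of a linking edge. -/
def pendants (u : V) : Finset V := {w | S.center w = u ∧ w ∉ ({u, S.p, S.q, S.r, S.s} : Finset V)}

theorem mem_pendants : w ∈ S.pendants u ↔
    S.center w = u ∧ w ≠ u ∧ w ≠ S.p ∧ w ≠ S.q ∧ w ≠ S.r ∧ w ≠ S.s := by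
  simp [pendants]

theorem pendants_reverse : S.reverse.pendants = S.pendants := by
  ext u w
  simp only [mem_pendants, reverse]
  tauto

theorem graph_adj_pendant_iff (hw : w ∈ S.pendants u) : S.graph.Adj w z ↔ z = u := by
  have hcenter := S.center_center z
  rw [mem_pendants] at hw
  rw [graph_adj_iff]
  grind

theorem isBroom_p : IsBroom S.graph #(S.pendants (S.center S.p)) S.endLength S.p S.q := by
  have hcc := S.center_center
  have hpq := S.center_p_ne_center_q
  have hps := S.center_p_ne_center_s
  have hr := S.center_r
  rw [endLength]
  split_ifs with hp
  · refine .star ?_ (fun w => ?_) fun u hu w => S.graph_adj_pendant_iff (hp ▸ hu)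
    · rw [mem_pendants]
      tauto
    · grind [graph_adj_iff, mem_pendants]
  · refine .cons (.star ?_ (fun w => ?_) fun u hu w => S.graph_adj_pendant_iff hu) ?_ fun w => ?_
    · rw [mem_pendants]
      tauto
    all_goals grind [graph_adj_iff, mem_pendants]

theorem isBroom_s :
    IsBroom S.graph #(S.pendants (S.center S.s)) S.reverse.endLength S.s S.r :=
  S.graph_reverse ▸ S.pendants_reverse ▸ S.reverse.isBroom_p

theorem isBroom_armTop (h : S.q = S.r → S.q = S.center S.q) :
    IsBroom S.graph #(S.pendants (S.center S.p)) S.armLength S.armTop (S.center S.q) := by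
  have hcc := S.center_center
  have hpq := S.center_p_ne_center_q
  have hqs := S.center_q_ne_center_s
  rw [armLength, armTop]
  split_ifs with hq
  · exact hq ▸ S.isBroom_p
  · refine .cons S.isBroom_p ?_ fun w => ?_
    all_goals grind [graph_adj_iff]

theorem isBroom_reverse_armTop (h : S.q = S.r → S.q = S.center S.q) :
    IsBroom S.graph #(S.pendants (S.center S.s)) S.reverse.armLength S.reverse.armTop
      (S.center S.q) := by
  have hrev := S.reverse.isBroom_armTop fun hrq => hrq.trans ((h hrq.symm).trans S.center_r.symm)
  rw [graph_reverse, pendants_reverse] at hrev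
  exact S.center_r ▸ hrev

theorem isBroom_center_q (hqr : S.q = S.r) (hq : S.q ≠ S.center S.q) :
    IsBroom S.graph #(S.pendants (S.center S.q)) 1 (S.center S.q) S.q := by
  have hcc := S.center_center
  have hpq := S.center_p_ne_center_q
  have hqs := S.center_q_ne_center_s
  refine .star ?_ (fun w => ?_) fun u hu w => S.graph_adj_pendant_iff hu
  · rw [mem_pendants]
    tauto
  · grind [graph_adj_iff, mem_pendants]

theorem graph_adj_center_q_iff :
    S.graph.Adj (S.center S.q) w ↔
      w = S.armTop ∨ w = S.reverse.armTop ∨ w ∈ S.pendants (S.center S.q) := by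
  have hcc := S.center_center
  have hpq := S.center_p_ne_center_q
  have hqs := S.center_q_ne_center_s
  have hr := S.center_r
  grind [graph_adj_iff, mem_pendants, armTop, reverse]

theorem armTop_notMem_pendants : S.armTop ∉ S.pendants u := by
  grind [armTop, mem_pendants]

theorem card_pendants_center_p_ne_zero (h : (S.graph.neighborSet (S.center S.p)).Nontrivial) :
    #(S.pendants (S.center S.p)) ≠ 0 := by
  have hcc := S.center_center
  have hpq := S.center_p_ne_center_q
  have hps := S.center_p_ne_center_s
  have hr := S.center_r
  obtain ⟨w, hw, hne⟩ := h.exists_ne (if S.p = S.center S.p then S.q else S.p)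
  rw [mem_neighborSet] at hw
  refine Finset.card_ne_zero_of_mem (a := w) ?_
  grind [graph_adj_iff, mem_pendants]

theorem card_pendants_center_s_ne_zero (h : (S.graph.neighborSet (S.center S.s)).Nontrivial) :
    #(S.pendants (S.center S.s)) ≠ 0 :=
  S.pendants_reverse ▸ S.reverse.card_pendants_center_p_ne_zero (S.graph_reverse ▸ h)

theorem card_pendants_center_q_ne_zero (hqr : S.q = S.r) (hq : S.q ≠ S.center S.q)
    (h : (S.graph.neighborSet (S.center S.q)).Nontrivial) :
    #(S.pendants (S.center S.q)) ≠ 0 := by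
  have hcc := S.center_center
  have hpq := S.center_p_ne_center_q
  have hqs := S.center_q_ne_center_s
  obtain ⟨w, hw, hne⟩ := h.exists_ne S.q
  rw [mem_neighborSet] at hw
  refine Finset.card_ne_zero_of_mem (a := w) ?_
  grind [graph_adj_iff, mem_pendants]

theorem card_center_eq (u : V) : #{w | S.center w = u} =
    #(S.pendants u) + #{w ∈ ({u, S.p, S.q, S.r, S.s} : Finset V) | S.center w = u} := by
  rw [← Finset.card_filter_add_card_filter_not (s := {w | S.center w = u})
    (· ∈ ({u, S.p, S.q, S.r, S.s} : Finset V)), add_comm]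
  simp only [pendants, Finset.filter_filter]
  congr 2
  ext w
  simp only [Finset.mem_filter, Finset.mem_univ, true_and, and_comm]

theorem card_center_eq_center_p :
    #{w | S.center w = S.center S.p} = #(S.pendants (S.center S.p)) + S.endLength := by
  have hcc := S.center_center
  have hpq := S.center_p_ne_center_q
  have hps := S.center_p_ne_center_s
  have hr := S.center_r
  have hpath : ({S.center S.p, S.p, S.q, S.r, S.s} : Finset V).filter
      (S.center · = S.center S.p) = {S.center S.p, S.p} := by
    grind
  rw [card_center_eq, hpath, endLength]
  grind

theorem card_center_eq_center_q :
    #{w | S.center w = S.center S.q} =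
      #(S.pendants (S.center S.q)) + #{S.center S.q, S.q, S.r} := by
  have hcc := S.center_center
  have hpq := S.center_p_ne_center_q
  have hqs := S.center_q_ne_center_s
  have hr := S.center_r
  rw [card_center_eq]
  congr 2
  ext w
  simp only [Finset.mem_filter, Finset.mem_insert, Finset.mem_singleton]
  grind

theorem card_eq_sum_card_center_eq : Fintype.card V =
    #{w | S.center w = S.center S.p} + #{w | S.center w = S.center S.q} +
      #{w | S.center w = S.center S.s} := by
  have hmaps : ∀ v ∈ Finset.univ,
      S.center v ∈ ({S.center S.p, S.center S.q, S.center S.s} : Finset V) := by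
    simpa using S.center_eq
  rw [← Finset.card_univ, Finset.card_eq_sum_card_fiberwise hmaps, Finset.sum_insert,
    Finset.sum_pair S.center_q_ne_center_s, add_assoc]
  simp [S.center_p_ne_center_q, S.center_p_ne_center_s]

theorem card_eq_endLength : Fintype.card V =
    #(S.pendants (S.center S.q)) + #{S.center S.q, S.q, S.r} +
      (#(S.pendants (S.center S.p)) + S.endLength) +
      (#(S.pendants (S.center S.s)) + S.reverse.endLength) := by
  have hs : #{w | S.center w = S.center S.s} =
      #(S.pendants (S.center S.s)) + S.reverse.endLength :=
    S.pendants_reverse ▸ S.reverse.card_center_eq_center_p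
  have := S.card_eq_sum_card_center_eq
  have := S.card_center_eq_center_p
  have := S.card_center_eq_center_q
  omega

theorem card_eq_armLength (h : S.q = S.r → S.q = S.center S.q) : Fintype.card V =
    1 + #(S.pendants (S.center S.q)) + (#(S.pendants (S.center S.p)) + S.armLength) +
      (#(S.pendants (S.center S.s)) + S.reverse.armLength) := by
  have hr : S.reverse.armLength =
      if S.r = S.center S.q then S.reverse.endLength else S.reverse.endLength + 1 := by
    rw [armLength, ← S.center_r]
    rfl
  rw [S.card_eq_endLength, hr, armLength]
  grind

end Pendants

end StarChain

namespace StarChain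

open scoped Finset

variable {V : Type*} [Fintype V] [DecidableEq V] (S : StarChain V)

/-- Sends the path of `G2graph` to `center p, p, q, center q, r, s, center s` and its pendent
vertices to those of the three stars. -/
noncomputable def ofG2graph :
    Fin 7 ⊕ (Fin #(S.pendants (S.center S.p)) ⊕ Fin #(S.pendants (S.center S.q)) ⊕
      Fin #(S.pendants (S.center S.s))) → V :=
  Sum.elim ![S.center S.p, S.p, S.q, S.center S.q, S.r, S.s, S.center S.s]
    (Sum.elim (fun j => ((S.pendants (S.center S.p)).equivFin.symm j : V))
      (Sum.elim (fun j => ((S.pendants (S.center S.q)).equivFin.symm j : V))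
        fun j => ((S.pendants (S.center S.s)).equivFin.symm j : V)))

theorem surjective_ofG2graph : Function.Surjective S.ofG2graph := by
  have pendant {u v : V} (hv : v ∈ S.pendants u) :
      ∃ j, ((S.pendants u).equivFin.symm j : V) = v :=
    ⟨(S.pendants u).equivFin ⟨v, hv⟩, by simp⟩
  intro v
  by_cases hpath : v ∈ Set.range ![S.center S.p, S.p, S.q, S.center S.q, S.r, S.s, S.center S.s]
  · obtain ⟨i, rfl⟩ := hpath
    exact ⟨.inl i, rfl⟩
  simp only [Matrix.range_cons, Matrix.range_empty, Set.union_empty, Set.mem_union,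
    Set.mem_singleton_iff, not_or] at hpath
  obtain ⟨hv₀, hv₁, hv₂, hv₃, hv₄, hv₅, hv₆⟩ := hpath
  rcases S.center_eq v with hv | hv | hv
  · obtain ⟨j, hj⟩ := pendant (S.mem_pendants.2 ⟨hv, hv₀, hv₁, hv₂, hv₄, hv₅⟩)
    exact ⟨.inr (.inl j), hj⟩
  · obtain ⟨j, hj⟩ := pendant (S.mem_pendants.2 ⟨hv, hv₃, hv₁, hv₂, hv₄, hv₅⟩)
    exact ⟨.inr (.inr (.inl j)), hj⟩
  · obtain ⟨j, hj⟩ := pendant (S.mem_pendants.2 ⟨hv, hv₆, hv₁, hv₂, hv₄, hv₅⟩)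
    exact ⟨.inr (.inr (.inr j)), hj⟩

theorem graph_adj_ofG2graph (hp : S.p ≠ S.center S.p) (hq : S.q ≠ S.center S.q)
    (hr : S.r ≠ S.center S.r) (hs : S.s ≠ S.center S.s) {x y}
    (h : (G2graph _ _ _).Adj x y) : S.graph.Adj (S.ofG2graph x) (S.ofG2graph y) := by
  have pendant (u : V) (j) : S.graph.Adj u ((S.pendants u).equivFin.symm j) :=
    ((S.graph_adj_pendant_iff ((S.pendants u).equivFin.symm j).2).2 rfl).symm
  have hqr : S.graph.Adj (S.center S.q) S.r := S.center_r ▸ (S.graph_adj_center hr).symm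
  rw [G2graph, fromRel_adj] at h
  wlog hxy : _ generalizing x y
  · exact (this ⟨h.1.symm, h.2.symm⟩ (h.2.resolve_left hxy)).symm
  rcases hxy with ⟨rfl, rfl⟩ | ⟨rfl, rfl⟩ | ⟨rfl, rfl⟩ | ⟨rfl, rfl⟩ | ⟨rfl, rfl⟩ | ⟨rfl, rfl⟩ |
    ⟨j, rfl, rfl⟩ | ⟨j, rfl, rfl⟩ | ⟨j, rfl, rfl⟩
  · exact (S.graph_adj_center hp).symm
  · exact S.graph_adj_p_q
  · exact S.graph_adj_center hq
  · exact hqr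
  · exact S.graph_adj_r_s
  · exact S.graph_adj_center hs
  · exact pendant _ j
  · exact pendant _ j
  · exact pendant _ j

theorem nonempty_iso_G2graph
    (hmin : Minimal (fun K : SimpleGraph V => K.Connected ∧ domNum K = 3) S.graph)
    (h : S.q = S.r → S.q = S.center S.q) (harm : S.armLength = 3)
    (harm' : S.reverse.armLength = 3) :
    Nonempty (S.graph ≃g G2graph #(S.pendants (S.center S.p)) #(S.pendants (S.center S.q))
      #(S.pendants (S.center S.s))) := by
  have hcard := S.card_eq_armLength h
  obtain ⟨hp, hq⟩ := S.armLength_eq_three_iff.1 harm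
  obtain ⟨hs, hr⟩ := S.reverse.armLength_eq_three_iff.1 harm'
  have hbij : Function.Bijective S.ofG2graph := by
    refine (Fintype.bijective_iff_surjective_and_card _).2 ⟨S.surjective_ofG2graph, ?_⟩
    simp only [Fintype.card_sum, Fintype.card_fin]
    omega
  exact nonempty_iso_of_minimal hmin (connected_G2graph _ _ _) (domNum_G2graph _ _ _)
    (.ofBijective _ hbij) fun _ _ => S.graph_adj_ofG2graph hp hq hr hs

end StarChain

section Main

open scoped Finset

variable {V : Type*} [Fintype V]

namespace StarChain

variable (S : StarChain V) {lam : ℝ} {x : V → ℝ}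

theorem exists_admissible_of_isPosEigenvector (hx : IsPosEigenvector S.graph lam x)
    (hdeg : ∀ v, (S.graph.neighborSet (S.center v)).Nontrivial)
    (hqr : S.q = S.r) (hq : S.q ≠ S.center S.q) :
    ∃ A B C, A + B + C + 7 = Fintype.card V ∧ Admissible (lam ^ 2) A B C := by
  classical
  have hcard := S.card_eq_endLength
  have hfork : #{S.center S.q, S.q, S.r} = 2 := by
    rw [← hqr, Finset.pair_eq_singleton, Finset.card_pair hq.symm]
  have hpq : S.p ≠ S.center S.q :=
    ne_of_apply_ne S.center ((S.center_center _).symm ▸ S.center_p_ne_center_q)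
  have hps : S.p ≠ S.s := ne_of_apply_ne S.center S.center_p_ne_center_s
  have hqs : S.center S.q ≠ S.s :=
    ne_of_apply_ne S.center ((S.center_center _).symm ▸ S.center_q_ne_center_s)
  have hp := S.isBroom_p
  have hc := S.isBroom_center_q hqr hq
  have hs := hqr ▸ S.isBroom_s
  have hlam := hx.eigenvalue_pos hp.adj
  have hsum := hx.iterate_add_iterate_add_iterate hp hc hs hpq hps hqs
    fun w => S.graph_adj_q_iff hqr hq
  obtain ⟨A, B, C, hABC, hadm⟩ := exists_admissible_of_tripod (pow_pos hlam 2)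
    (S.card_pendants_center_p_ne_zero (hdeg _)) (S.card_pendants_center_s_ne_zero (hdeg _))
    (S.card_pendants_center_q_ne_zero hqr hq (hdeg _))
    S.endLength_ne_zero S.reverse.endLength_ne_zero S.endLength_le_two S.reverse.endLength_le_two
    ((hc.subcritical_and_mul_eq hx).1 0 one_pos)
    (hp.subcritical_and_mul_eq hx).1 (hs.subcritical_and_mul_eq hx).1 hsum
  exact ⟨A, B, C, by omega, hadm⟩

variable [DecidableEq V]

theorem arms_eq_of_isPosEigenvector (hx : IsPosEigenvector S.graph lam x)
    (hdeg : ∀ v, (S.graph.neighborSet (S.center v)).Nontrivial)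
    (h : S.q = S.r → S.q = S.center S.q) (hcard : 11 ≤ Fintype.card V)
    (hmin : ∀ A B C, A + B + C + 7 = Fintype.card V → ¬ Admissible (lam ^ 2) A B C) :
    S.armLength = 3 ∧ S.reverse.armLength = 3 ∧
      #(S.pendants (S.center S.p)) = #(S.pendants (S.center S.s)) := by
  have ha := S.card_pendants_center_p_ne_zero (hdeg _)
  have hp := S.isBroom_armTop h
  have hs := S.isBroom_reverse_armTop h
  have hsub := (hp.subcritical_and_mul_eq hx).1
  have ht : 1 < lam ^ 2 :=
    (Nat.one_le_cast.2 (Nat.one_le_iff_ne_zero.2 ha)).trans_lt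
      (hsub 0 (Nat.pos_of_ne_zero S.armLength_ne_zero))
  have hsum := hx.iterate_add_card_add_iterate hp hs (S.armTop_ne_armTop_reverse h)
    S.armTop_notMem_pendants (S.pendants_reverse ▸ S.reverse.armTop_notMem_pendants)
    (fun w => S.graph_adj_center_q_iff) fun w hw z => S.graph_adj_pendant_iff hw
  exact arms_eq_of_forall_not_admissible ht ha (S.card_pendants_center_s_ne_zero (hdeg _))
    S.armLength_ne_zero S.reverse.armLength_ne_zero S.armLength_le_three
    S.reverse.armLength_le_three (S.card_eq_armLength h) hcard hsub
    (hs.subcritical_and_mul_eq hx).1 hsum hmin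

end StarChain

variable [DecidableEq V] {G : SimpleGraph V}

theorem IsMinimizer.not_admissible (hG : IsMinimizer 3 G)
    (hlam : 0 < specRad G) {A B C : ℕ} (hcard : A + B + C + 7 = Fintype.card V) :
    ¬ Admissible (specRad G ^ 2) A B C := fun hadm =>
  (specRad_G2graph_lt hlam hadm).not_ge <|
    hG.specRad_le_of_card_eq (connected_G2graph A B C) (domNum_G2graph A B C) <| by
      simp only [Fintype.card_sum, Fintype.card_fin]
      omega

theorem IsMinimizer.exists_starChain (hG : IsMinimizer 3 G)
    (hcard : 11 ≤ Fintype.card V) :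
    ∃ S : StarChain V, S.graph = G ∧ (S.q = S.r → S.q = S.center S.q) ∧
      S.armLength = 3 ∧ S.reverse.armLength = 3 ∧ #(S.pendants (S.center S.p)) ≠ 0 ∧
      #(S.pendants (S.center S.p)) = #(S.pendants (S.center S.s)) := by
  obtain ⟨S, rfl, hdeg⟩ := exists_starChain_graph_eq hG.minimal (by omega)
  obtain ⟨x, hx⟩ := exists_isPosEigenvector_specRad hG.connected
  have hadm {A B C : ℕ} := hG.not_admissible (hx.eigenvalue_pos S.graph_adj_p_q)
    (A := A) (B := B) (C := C)
  have htri : S.q = S.r → S.q = S.center S.q := fun hqr => by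
    by_contra hq
    obtain ⟨A, B, C, hABC, h⟩ := S.exists_admissible_of_isPosEigenvector hx hdeg hqr hq
    exact hadm hABC h
  obtain ⟨harm, harm', heq⟩ :=
    S.arms_eq_of_isPosEigenvector hx hdeg htri hcard fun _ _ _ => hadm
  exact ⟨S, rfl, htri, harm, harm', S.card_pendants_center_p_ne_zero (hdeg _), heq⟩

end Main

theorem minimizer_domNum_three_balanced_form (n : ℕ) (hn : 11 ≤ n)
    (G : SimpleGraph (Fin n)) (hconn : G.Connected) (hdom : domNum G = 3)
    (hmin : ∀ H : SimpleGraph (Fin n), H.Connected → domNum H = 3 →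
      specRad G ≤ specRad H) :
    ∃ a : ℕ, 1 ≤ a ∧ 2 * a + 7 ≤ n ∧
      Nonempty (G ≃g G2graph a (n - 2 * a - 7) a) := by
  have hG : IsMinimizer 3 G := ⟨hconn, hdom, hmin⟩
  obtain ⟨S, rfl, htri, harm, harm', ha, heq⟩ := hG.exists_starChain (by rwa [Fintype.card_fin])
  have hcard := S.card_eq_armLength htri
  rw [Fintype.card_fin, harm, harm', ← heq] at hcard
  have hb : (S.pendants (S.center S.q)).card = n - 2 * (S.pendants (S.center S.p)).card - 7 := by
    omega
  have hiso := S.nonempty_iso_G2graph hG.minimal htri harm harm'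
  rw [← heq, hb] at hiso
  exact ⟨_, Nat.one_le_iff_ne_zero.2 ha, by omega, hiso⟩
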